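/- arXiv:1311.5850 — 6 statements merged into one kernel-verified Lean document; each statement's English description precedes it below -/
import Mathlib

section
/- (Support size bound, elliptic case.) Let γ > 0 and let f : ℝ → ℝ be integrable. Let u : ℝ → ℝ be continuously differentiable with compact support, twice differentiable on the open set U = {x : u(x) ≠ 0}, and satisfy u''(x) = −f(x) + γ·sign(u(x)) for every x ∈ U. Then the Lebesgue measure of U satisfies γ · μ(U) ≤ ∫_U |f(x)| dx. -/
open MeasureTheory

/-!
On a component `(a, b)` of `{u ≠ 0}` where, say, `u > 0`, the mean value theorem yields points
arbitrarily close to `a` with `u' > 0` and points arbitrarily close to `b` with `u' < 0`, because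
`u` vanishes at both ends. As `u''` is integrable, `u'` has limits at the ends, so `∫ u'' ≤ 0` over
the component. Since `γ = u'' + f` there, `γ (b - a) ≤ ∫ |f|`. Summing over the countably many
components gives the bound.
-/

open Filter Set
open scoped Topology ENNReal

section Components

variable {α : Type*} {U : Set α}

/-- The endpoints `(a, b)` of the nonempty components of `U` of the form `Ioo a b`, encoded by
`Ioo a b ⊆ U` and `a, b ∉ U`; used to enumerate the components of an open subset of the line. -/
def componentEndpoints [Preorder α] (U : Set α) : Set (α × α) :=
  {p | p.1 ∉ U ∧ p.2 ∉ U ∧ (Ioo p.1 p.2).Nonempty ∧ Ioo p.1 p.2 ⊆ U}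

theorem componentEndpoints_pairwiseDisjoint [LinearOrder α] (U : Set α) :
    (componentEndpoints U).PairwiseDisjoint fun p ↦ Ioo p.1 p.2 := by
  rintro ⟨a, b⟩ ⟨ha, hb, -, hab⟩ ⟨c, d⟩ ⟨hc, hd, -, hcd⟩ hne
  refine disjoint_left.2 fun x ⟨hax, hxb⟩ ⟨hcx, hxd⟩ ↦ hne ?_
  have hac : a = c := le_antisymm
    (not_lt.1 fun hca ↦ ha (hcd ⟨hca, hax.trans hxd⟩))
    (not_lt.1 fun hac ↦ hc (hab ⟨hac, hcx.trans hxb⟩))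
  have hbd : b = d := le_antisymm
    (not_lt.1 fun hdb ↦ hd (hab ⟨hax.trans hxd, hdb⟩))
    (not_lt.1 fun hbd ↦ hb (hcd ⟨hcx.trans hxb, hbd⟩))
  rw [hac, hbd]

theorem componentEndpoints_countable [LinearOrder α] [TopologicalSpace α] [OrderClosedTopology α]
    [TopologicalSpace.SeparableSpace α] (U : Set α) : (componentEndpoints U).Countable :=
  (componentEndpoints_pairwiseDisjoint U).countable_of_isOpen (fun _ _ ↦ isOpen_Ioo)
    fun _ hp ↦ hp.2.2.1

section ConditionallyComplete

variable [ConditionallyCompleteLinearOrder α] [TopologicalSpace α] [OrderTopology α]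

theorem exists_Ico_subset_of_isOpen {x : α} (hU : IsOpen U) (hx : x ∈ U) (h : ∃ y ≥ x, y ∉ U) :
    ∃ b ∉ U, x < b ∧ Ico x b ⊆ U := by
  have hbdd : BddBelow (Uᶜ ∩ Ici x) := ⟨x, fun _ hy ↦ hy.2⟩
  obtain ⟨y, hxy, hy⟩ := h
  obtain ⟨hbU, hxb⟩ := (hU.isClosed_compl.inter isClosed_Ici).csInf_mem ⟨y, hy, hxy⟩ hbdd
  refine ⟨_, hbU, lt_of_le_of_ne hxb fun h ↦ hbU (h ▸ hx), fun z hz ↦ ?_⟩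
  by_contra hzU
  exact (csInf_le hbdd ⟨hzU, hz.1⟩).not_gt hz.2

theorem exists_Ioc_subset_of_isOpen {x : α} (hU : IsOpen U) (hx : x ∈ U) (h : ∃ y ≤ x, y ∉ U) :
    ∃ a ∉ U, a < x ∧ Ioc a x ⊆ U := by
  obtain ⟨a, haU, hax, ha⟩ := exists_Ico_subset_of_isOpen (α := αᵒᵈ) hU hx h
  exact ⟨a, haU, hax, fun z hz ↦ ha ⟨hz.2, hz.1⟩⟩

theorem biUnion_componentEndpoints [Nonempty α] (hU : IsOpen U)
    (hbot : ∃ᶠ x in atBot, x ∉ U) (htop : ∃ᶠ x in atTop, x ∉ U) :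
    ⋃ p ∈ componentEndpoints U, Ioo p.1 p.2 = U := by
  refine (iUnion₂_subset fun p hp ↦ hp.2.2.2).antisymm fun x hx ↦ ?_
  obtain ⟨a, haU, hax, ha⟩ := exists_Ioc_subset_of_isOpen hU hx (hbot.forall_exists_of_atBot x)
  obtain ⟨b, hbU, hxb, hb⟩ := exists_Ico_subset_of_isOpen hU hx (htop.forall_exists_of_atTop x)
  have hab : Ioo a b ⊆ U := fun z hz ↦ (le_total z x).elim
    (fun hzx ↦ ha ⟨hz.1, hzx⟩) (fun hxz ↦ hb ⟨hxz, hz.2⟩)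
  exact mem_biUnion (x := (a, b)) ⟨haU, hbU, ⟨x, hax, hxb⟩, hab⟩ ⟨hax, hxb⟩

theorem measure_le_measure_of_forall_componentEndpoints [TopologicalSpace.SeparableSpace α]
    [MeasurableSpace α] [OpensMeasurableSpace α] {μ ν : Measure α} (hU : IsOpen U)
    (hbot : ∃ᶠ x in atBot, x ∉ U) (htop : ∃ᶠ x in atTop, x ∉ U)
    (h : ∀ p ∈ componentEndpoints U, μ (Ioo p.1 p.2) ≤ ν (Ioo p.1 p.2)) : μ U ≤ ν U := by
  have : Nonempty α := htop.exists.nonempty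
  have measure_eq_tsum (m : Measure α) :
      m U = ∑' p : componentEndpoints U, m (Ioo p.1.1 p.1.2) := by
    conv_lhs => rw [← biUnion_componentEndpoints hU hbot htop]
    exact measure_biUnion (componentEndpoints_countable U) (componentEndpoints_pairwiseDisjoint U)
      fun _ _ ↦ measurableSet_Ioo
  rw [measure_eq_tsum μ, measure_eq_tsum ν]
  exact ENNReal.tsum_le_tsum fun p ↦ h p p.2

end ConditionallyComplete

end Components

theorem forall_gt_or_forall_lt_of_isPreconnected {X β : Type*} [TopologicalSpace X] [LinearOrder β]
    [TopologicalSpace β] [OrderClosedTopology β] {s : Set X} {g : X → β} {c : β}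
    (hs : IsPreconnected s) (hg : ContinuousOn g s) (hne : ∀ x ∈ s, g x ≠ c) :
    (∀ x ∈ s, c < g x) ∨ ∀ x ∈ s, g x < c := by
  by_contra! ⟨⟨x, hx, hxc⟩, y, hy, hcy⟩
  obtain ⟨z, hz, hzc⟩ := hs.intermediate_value hx hy hg ⟨hxc, hcy⟩
  exact hne z hz hzc

theorem eventually_cocompact_eq_zero_of_hasCompactSupport {X β : Type*} [TopologicalSpace X]
    [Zero β] {u : X → β} (hu : HasCompactSupport u) : ∀ᶠ x in cocompact X, u x = 0 :=
  mem_of_superset hu.isCompact.compl_mem_cocompact fun _ ↦ image_eq_zero_of_notMem_tsupport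

section Calculus

variable {a b : ℝ}

theorem exists_tendsto_of_hasDerivAt_of_intervalIntegrable {E : Type*} [NormedAddCommGroup E]
    [NormedSpace ℝ E] [CompleteSpace E] {w v : ℝ → E} (hab : a < b)
    (hw : ∀ x ∈ Ioo a b, HasDerivAt w (v x) x) (hv : IntervalIntegrable v volume a b) :
    ∃ l r, Tendsto w (𝓝[>] a) (𝓝 l) ∧ Tendsto w (𝓝[<] b) (𝓝 r) := by
  obtain ⟨m, hm⟩ := nonempty_Ioo.2 hab
  have hsub {x} (hx : x ∈ Ioo a b) : uIcc m x ⊆ Ioo a b := ordConnected_Ioo.uIcc_subset hm hx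
  have hprim : ∀ x ∈ Ioo a b, w m + ∫ t in m..x, v t = w x := fun x hx ↦ by
    rw [intervalIntegral.integral_eq_sub_of_hasDerivAt (fun t ht ↦ hw t (hsub hx ht))
      (hv.mono_set ((hsub hx).trans (Ioo_subset_Icc_self.trans Icc_subset_uIcc))),
      add_sub_cancel]
  have hcont : ContinuousOn (fun x ↦ w m + ∫ t in m..x, v t) (Icc a b) := by
    rw [← uIcc_of_le hab.le]
    exact continuousOn_const.add <| intervalIntegral.continuousOn_primitive_interval' hv <|
      Icc_subset_uIcc <| Ioo_subset_Icc_self hm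
  refine ⟨_, _,
    ((hcont.continuousWithinAt (left_mem_Icc.2 hab.le)).mono_of_mem_nhdsWithin
      (Icc_mem_nhdsGT hab)).tendsto.congr' ?_,
    ((hcont.continuousWithinAt (right_mem_Icc.2 hab.le)).mono_of_mem_nhdsWithin
      (Icc_mem_nhdsLT hab)).tendsto.congr' ?_⟩
  · filter_upwards [Ioo_mem_nhdsGT hab] using hprim
  · filter_upwards [Ioo_mem_nhdsLT hab] using hprim

theorem frequently_nhdsGT_deriv_pos {u : ℝ → ℝ} (hab : a < b) (hu : ContinuousOn u (Icc a b))
    (hdiff : DifferentiableOn ℝ u (Ioo a b)) (hlt : ∀ x ∈ Ioo a b, u a < u x) :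
    ∃ᶠ x in 𝓝[>] a, 0 < deriv u x := by
  refine (nhdsGT_basis a).frequently_iff.2 fun c hac ↦ ?_
  obtain ⟨d, had, hdbc⟩ := exists_between (lt_min hab hac)
  obtain ⟨hdb, hdc⟩ := lt_min_iff.1 hdbc
  obtain ⟨x, hx, hslope⟩ := exists_deriv_eq_slope u had (hu.mono (Icc_subset_Icc_right hdb.le))
    (hdiff.mono (Ioo_subset_Ioo_right hdb.le))
  refine ⟨x, ⟨hx.1, hx.2.trans hdc⟩, hslope ▸ ?_⟩
  exact div_pos (sub_pos.2 (hlt d ⟨had, hdb⟩)) (sub_pos.2 had)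

theorem frequently_nhdsLT_deriv_neg {u : ℝ → ℝ} (hab : a < b) (hu : ContinuousOn u (Icc a b))
    (hdiff : DifferentiableOn ℝ u (Ioo a b)) (hlt : ∀ x ∈ Ioo a b, u b < u x) :
    ∃ᶠ x in 𝓝[<] b, deriv u x < 0 := by
  refine (nhdsLT_basis b).frequently_iff.2 fun c hcb ↦ ?_
  obtain ⟨d, hacd, hdb⟩ := exists_between (max_lt hab hcb)
  obtain ⟨had, hcd⟩ := max_lt_iff.1 hacd
  obtain ⟨x, hx, hslope⟩ := exists_deriv_eq_slope u hdb (hu.mono (Icc_subset_Icc_left had.le))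
    (hdiff.mono (Ioo_subset_Ioo_left had.le))
  refine ⟨x, ⟨hcd.trans hx.1, hx.2⟩, hslope ▸ ?_⟩
  exact div_neg_of_neg_of_pos (sub_neg.2 (hlt d ⟨had, hdb⟩)) (sub_pos.2 hdb)

theorem integral_deriv_deriv_nonpos {u v : ℝ → ℝ} (hab : a < b) (hu : ContinuousOn u (Icc a b))
    (hdiff : DifferentiableOn ℝ u (Ioo a b)) (ha : ∀ x ∈ Ioo a b, u a < u x)
    (hb : ∀ x ∈ Ioo a b, u b < u x) (hv : ∀ x ∈ Ioo a b, HasDerivAt (deriv u) (v x) x)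
    (hint : IntervalIntegrable v volume a b) : ∫ x in a..b, v x ≤ 0 := by
  obtain ⟨l, r, hl, hr⟩ := exists_tendsto_of_hasDerivAt_of_intervalIntegrable hab hv hint
  have l_nonneg : 0 ≤ l := ge_of_tendsto_of_frequently hl <|
    (frequently_nhdsGT_deriv_pos hab hu hdiff ha).mono fun _ ↦ le_of_lt
  have r_nonpos : r ≤ 0 := le_of_tendsto_of_frequently hr <|
    (frequently_nhdsLT_deriv_neg hab hu hdiff hb).mono fun _ ↦ le_of_lt
  rw [intervalIntegral.integral_eq_sub_of_hasDerivAt_of_tendsto hab hv hint hl hr]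
  linarith

theorem mul_sub_le_integral_abs_of_pos {γ : ℝ} {f u : ℝ → ℝ} (hab : a < b)
    (hf : IntervalIntegrable f volume a b) (hu : ContinuousOn u (Icc a b))
    (hdiff : DifferentiableOn ℝ u (Ioo a b)) (ha : u a = 0) (hb : u b = 0)
    (hpos : ∀ x ∈ Ioo a b, 0 < u x)
    (hpde : ∀ x ∈ Ioo a b, HasDerivAt (deriv u) (-f x + γ) x) :
    γ * (b - a) ≤ ∫ x in a..b, |f x| := by
  have hconst : IntervalIntegrable (fun _ ↦ γ) volume a b := intervalIntegrable_const
  have integral_le : ∫ x in a..b, (-f x + γ) ≤ 0 :=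
    integral_deriv_deriv_nonpos hab hu hdiff (ha ▸ hpos) (hb ▸ hpos) hpde (hf.neg.add hconst)
  rw [intervalIntegral.integral_add (f := fun x ↦ -f x) hf.neg hconst,
    intervalIntegral.integral_neg, intervalIntegral.integral_const, smul_eq_mul] at integral_le
  calc γ * (b - a) ≤ ∫ x in a..b, f x := by linarith
    _ ≤ |∫ x in a..b, f x| := le_abs_self _
    _ ≤ ∫ x in a..b, |f x| := intervalIntegral.abs_integral_le_integral_abs hab.le

theorem mul_sub_le_integral_abs {γ : ℝ} {f u : ℝ → ℝ} (hab : a < b)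
    (hf : IntervalIntegrable f volume a b) (hu : ContinuousOn u (Icc a b))
    (hdiff : DifferentiableOn ℝ u (Ioo a b)) (ha : u a = 0) (hb : u b = 0)
    (hne : ∀ x ∈ Ioo a b, u x ≠ 0)
    (hpde : ∀ x ∈ Ioo a b, HasDerivAt (deriv u) (-f x + γ * Real.sign (u x)) x) :
    γ * (b - a) ≤ ∫ x in a..b, |f x| := by
  rcases forall_gt_or_forall_lt_of_isPreconnected isPreconnected_Ioo
    (hu.mono Ioo_subset_Icc_self) hne with hpos | hneg
  · refine mul_sub_le_integral_abs_of_pos hab hf hu hdiff ha hb hpos fun x hx ↦ ?_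
    simpa only [Real.sign_of_pos (hpos x hx), mul_one] using hpde x hx
  · have hpde_neg : ∀ x ∈ Ioo a b, HasDerivAt (deriv (-u)) (-(-f) x + γ) x := fun x hx ↦ by
      rw [deriv.neg']
      refine (hpde x hx).neg.congr_deriv ?_
      rw [Real.sign_of_neg (hneg x hx), Pi.neg_apply]
      ring
    simpa only [Pi.neg_apply, abs_neg] using mul_sub_le_integral_abs_of_pos hab hf.neg hu.neg
      hdiff.neg (by simp [ha]) (by simp [hb]) (fun x hx ↦ neg_pos.2 (hneg x hx)) hpde_neg

end Calculus

theorem ofReal_mul_volume_ne_zero_le_lintegral {γ : ℝ} {f u : ℝ → ℝ}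
    (hf : IntegrableOn f {y | u y ≠ 0}) (hu : Continuous u)
    (hdiff : DifferentiableOn ℝ u {y | u y ≠ 0})
    (hbot : ∃ᶠ x in atBot, u x = 0) (htop : ∃ᶠ x in atTop, u x = 0)
    (hpde : ∀ x ∈ {y | u y ≠ 0}, HasDerivAt (deriv u) (-f x + γ * Real.sign (u x)) x) :
    ENNReal.ofReal γ * volume {y | u y ≠ 0} ≤ ∫⁻ x in {y | u y ≠ 0}, ‖f x‖ₑ := by
  set U := {y | u y ≠ 0}
  have hU : IsOpen U := isOpen_ne_fun hu continuous_const
  rw [← smul_eq_mul, ← Measure.smul_apply, ← withDensity_apply _ hU.measurableSet]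
  refine measure_le_measure_of_forall_componentEndpoints hU
    (by simpa [U] using hbot) (by simpa [U] using htop) ?_
  rintro ⟨a, b⟩ ⟨ha, hb, hne, hsub⟩
  have hab : a < b := nonempty_Ioo.1 hne
  have hfab : IntegrableOn f (Ioo a b) := hf.mono_set hsub
  have hle : γ * (b - a) ≤ ∫ x in a..b, |f x| := mul_sub_le_integral_abs hab
    ((intervalIntegrable_iff_integrableOn_Ioo_of_le hab.le).2 hfab) hu.continuousOn
    (hdiff.mono hsub) (not_not.1 ha) (not_not.1 hb) hsub fun x hx ↦ hpde x (hsub hx)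
  rw [intervalIntegral.integral_of_le hab.le, integral_Ioc_eq_integral_Ioo] at hle
  calc ENNReal.ofReal γ * volume (Ioo a b) = ENNReal.ofReal (γ * (b - a)) := by
        rw [Real.volume_Ioo, ENNReal.ofReal_mul' (sub_nonneg.2 hab.le)]
    _ ≤ ENNReal.ofReal (∫ x in Ioo a b, ‖f x‖) := ENNReal.ofReal_le_ofReal hle
    _ = ∫⁻ x in Ioo a b, ‖f x‖ₑ := ofReal_integral_norm_eq_lintegral_enorm hfab
    _ = volume.withDensity (‖f ·‖ₑ) (Ioo a b) := (withDensity_apply _ measurableSet_Ioo).symm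

theorem stmt_4_general {γ : ℝ} (hγ : 0 < γ) {f u : ℝ → ℝ}
    (hf : IntegrableOn f {y | u y ≠ 0}) (hu : Continuous u)
    (hdiff : DifferentiableOn ℝ u {y | u y ≠ 0})
    (hbot : ∃ᶠ x in atBot, u x = 0) (htop : ∃ᶠ x in atTop, u x = 0)
    (hpde : ∀ x ∈ {y | u y ≠ 0}, HasDerivAt (deriv u) (-f x + γ * Real.sign (u x)) x) :
    volume {y | u y ≠ 0} < ∞ ∧
      γ * (volume {y | u y ≠ 0}).toReal ≤ ∫ x in {y | u y ≠ 0}, |f x| := by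
  have hle := ofReal_mul_volume_ne_zero_le_lintegral hf hu hdiff hbot htop hpde
  have hfin : ∫⁻ x in {y | u y ≠ 0}, ‖f x‖ₑ < ∞ := hf.2
  constructor
  · exact ENNReal.lt_top_of_mul_ne_top_right (hle.trans_lt hfin).ne (ENNReal.ofReal_pos.2 hγ).ne'
  · calc γ * (volume {y | u y ≠ 0}).toReal
        = (ENNReal.ofReal γ * volume {y | u y ≠ 0}).toReal := by
          rw [ENNReal.toReal_mul, ENNReal.toReal_ofReal hγ.le]
      _ ≤ (∫⁻ x in {y | u y ≠ 0}, ‖f x‖ₑ).toReal := ENNReal.toReal_mono hfin.ne hle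
      _ = ∫ x in {y | u y ≠ 0}, |f x| := (integral_norm_eq_lintegral_enorm hf.1).symm

/-- **Support size bound, elliptic case.** If `γ > 0`, `f` is integrable, `u` is `C¹` with
compact support, twice differentiable on `U = {u ≠ 0}` with `u'' = −f + γ sign u` there,
then `γ · μ(U) ≤ ∫_U |f|`. -/
theorem stmt_4 (γ : ℝ) (hγ : 0 < γ) (f : ℝ → ℝ) (hf : Integrable f)
    (u : ℝ → ℝ) (hu : ContDiff ℝ 1 u) (hsupp : HasCompactSupport u)
    (hpde : ∀ x ∈ {y : ℝ | u y ≠ 0},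
      HasDerivAt (deriv u) (-f x + γ * Real.sign (u x)) x) :
    γ * (volume {y : ℝ | u y ≠ 0}).toReal ≤ ∫ x in {y : ℝ | u y ≠ 0}, |f x| := by
  have hzero := eventually_cocompact_eq_zero_of_hasCompactSupport hsupp
  exact (stmt_4_general hγ hf.integrableOn hu.continuous
    (hu.differentiable one_ne_zero).differentiableOn
    (hzero.filter_mono atBot_le_cocompact).frequently
    (hzero.filter_mono atTop_le_cocompact).frequently hpde).2
end

section
/- (Refined support size bound, elliptic case.) Let γ > 0, let α, β ≥ 0 with α + β = 1 and α > 0, and let f : ℝ → ℝ be integrable. Let u : ℝ → ℝ be continuously differentiable with compact support, twice differentiable on the open set U = {x : u(x) ≠ 0}, and satisfy u''(x) = −f(x) + γ·sign(u(x)) for every x ∈ U. Then αγ · μ(U) ≤ ∫_ℝ (|f(x)| − βγ)⁺ dx, where (r)⁺ = max(r, 0). -/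
open MeasureTheory

/-! Kato's inequality `∫ sign(u) u'' ≤ 0` over `U = {u ≠ 0}` is the heart of the argument. For a
`C¹` function `φ` with `φ(0) = 0`, the function `φ(u) u'` is differentiable everywhere, even at the
zeros of `u`, where `u'` need not be; integrating its derivative gives
`∫ φ(u) u'' = -∫ φ'(u) (u')²`, which is nonpositive if `φ` is monotone. Kato's inequality follows by
letting `φ(t) = arctan(r t)` with `r → ∞`. On `U` the equation gives
`sign(u) u'' = γ - sign(u) f ≥ γ - |f|`, hence `γ μ(U) ≤ ∫_U |f|`, and `|f| ≤ βγ + (|f| - βγ)⁺`. -/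

open Filter Topology Function

lemma measurable_real_sign : Measurable Real.sign :=
  Measurable.ite measurableSet_Iio measurable_const
    (Measurable.ite measurableSet_Ioi measurable_const measurable_const)

lemma abs_real_sign_le_one (t : ℝ) : |Real.sign t| ≤ 1 := by
  rcases Real.sign_apply_eq t with h | h | h <;> simp [h]

lemma abs_arctan_le_pi_div_two (t : ℝ) : |Real.arctan t| ≤ Real.pi / 2 :=
  abs_le.2 ⟨(Real.neg_pi_div_two_lt_arctan t).le, (Real.arctan_lt_pi_div_two t).le⟩

lemma tendsto_arctan_mul_atTop (t : ℝ) :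
    Tendsto (fun r : ℝ ↦ Real.arctan (r * t)) atTop (𝓝 (Real.pi / 2 * Real.sign t)) := by
  rcases lt_trichotomy t 0 with ht | rfl | ht
  · rw [Real.sign_of_neg ht, mul_neg_one]
    exact (Real.tendsto_arctan_atBot.mono_right nhdsWithin_le_nhds).comp
      (tendsto_id.atTop_mul_const_of_neg ht)
  · simp
  · rw [Real.sign_of_pos ht, mul_one]
    exact (Real.tendsto_arctan_atTop.mono_right nhdsWithin_le_nhds).comp
      (tendsto_id.atTop_mul_const ht)

section Integral

variable {X : Type*} [MeasurableSpace X] {μ : Measure X}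

lemma integrable_pos_part_sub_const {g : X → ℝ} (hg : Integrable g μ) {c : ℝ} (hc : 0 ≤ c) :
    Integrable (fun x ↦ max (g x - c) 0) μ := by
  refine hg.abs.mono' ((hg.aestronglyMeasurable.sub aestronglyMeasurable_const).sup
    aestronglyMeasurable_const) (.of_forall fun x ↦ ?_)
  rw [Real.norm_of_nonneg (le_max_right _ _)]
  exact max_le ((sub_le_self _ hc).trans (le_abs_self _)) (abs_nonneg _)

lemma integral_le_integral_pos_part_sub_const_add [IsFiniteMeasure μ] {g : X → ℝ}
    (hg : Integrable g μ) (c : ℝ) :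
    ∫ x, g x ∂μ ≤ ∫ x, max (g x - c) 0 ∂μ + c * μ.real Set.univ := by
  have hmax : Integrable (fun x ↦ max (g x - c) 0) μ := (hg.sub (integrable_const c)).pos_part
  calc ∫ x, g x ∂μ
      ≤ ∫ x, (max (g x - c) 0 + c) ∂μ :=
        integral_mono hg (hmax.add (integrable_const c))
          fun x ↦ sub_le_iff_le_add.1 (le_max_left _ _)
    _ = ∫ x, max (g x - c) 0 ∂μ + c * μ.real Set.univ := by
        rw [integral_add hmax (integrable_const c), integral_const, smul_eq_mul, mul_comm c]

lemma isFiniteMeasure_restrict_support_of_hasCompactSupport {E : Type*} [TopologicalSpace X]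
    [IsFiniteMeasureOnCompacts μ] [Zero E] {u : X → E} (hsupp : HasCompactSupport u) :
    IsFiniteMeasure (μ.restrict (support u)) :=
  isFiniteMeasure_restrict.2 ((measure_mono (subset_tsupport u)).trans_lt
    hsupp.isCompact.measure_lt_top).ne

end Integral

lemma hasDerivAt_smul_of_eq_zero {𝕜 E : Type*} [NontriviallyNormedField 𝕜]
    [NormedAddCommGroup E] [NormedSpace 𝕜 E] {g : 𝕜 → 𝕜} {v : 𝕜 → E} {g' x : 𝕜}
    (hg : HasDerivAt g g' x) (hgx : g x = 0) (hv : ContinuousAt v x) :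
    HasDerivAt (fun y ↦ g y • v y) (g' • v x) x := by
  rw [hasDerivAt_iff_tendsto_slope] at hg ⊢
  refine (hg.smul (hv.tendsto.mono_left nhdsWithin_le_nhds)).congr fun y ↦ ?_
  simp only [slope, vsub_eq_sub, hgx, zero_smul, sub_zero, smul_eq_mul, mul_smul]

section Kato

variable {u w : ℝ → ℝ}

lemma hasDerivAt_comp_mul_deriv {φ : ℝ → ℝ} (hφ : Differentiable ℝ φ) (hφ0 : φ 0 = 0)
    (hu : ContDiff ℝ 1 u) (hw : ∀ x ∈ support u, HasDerivAt (deriv u) (w x) x) (x : ℝ) :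
    HasDerivAt (fun y ↦ φ (u y) * deriv u y)
      (φ (u x) * w x + deriv φ (u x) * deriv u x ^ 2) x := by
  have hφu : HasDerivAt (fun y ↦ φ (u y)) (deriv φ (u x) * deriv u x) x :=
    (hφ (u x)).hasDerivAt.comp x (hu.differentiable one_ne_zero x).hasDerivAt
  by_cases hx : u x = 0
  · have hφux : φ (u x) = 0 := by rw [hx, hφ0]
    exact (hasDerivAt_smul_of_eq_zero hφu hφux
      (hu.continuous_deriv le_rfl).continuousAt).congr_deriv (by rw [hφux, smul_eq_mul]; ring)
  · exact (hφu.mul (hw x hx)).congr_deriv (by ring)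

lemma setIntegral_comp_mul_eq_neg_integral_deriv_comp_mul_sq {φ : ℝ → ℝ}
    (hφ : ContDiff ℝ 1 φ) (hφ0 : φ 0 = 0) (hu : ContDiff ℝ 1 u) (hsupp : HasCompactSupport u)
    (hw : ∀ x ∈ support u, HasDerivAt (deriv u) (w x) x) (hwi : IntegrableOn w (support u)) :
    ∫ x in support u, φ (u x) * w x = -∫ x, deriv φ (u x) * deriv u x ^ 2 := by
  have hu' : Continuous (deriv u) := hu.continuous_deriv le_rfl
  have hφu : Continuous fun x ↦ φ (u x) := hφ.continuous.comp hu.continuous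
  have hφu_supp : HasCompactSupport fun x ↦ φ (u x) := hsupp.comp_left hφ0
  have hzero : ∀ x ∉ support u, φ (u x) * w x = 0 := fun x hx ↦ by
    rw [notMem_support.1 hx, hφ0, zero_mul]
  have hφw : Integrable fun x ↦ φ (u x) * w x := by
    obtain ⟨C, hC⟩ := hφu.bounded_above_of_compact_support hφu_supp
    exact IntegrableOn.integrable_of_forall_notMem_eq_zero
      (hwi.bdd_mul hφu.aestronglyMeasurable (.of_forall hC)) hzero
  have hφ'u' : Integrable fun x ↦ deriv φ (u x) * deriv u x ^ 2 :=
    (((hφ.continuous_deriv le_rfl).comp hu.continuous).mul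
      (hu'.pow 2)).integrable_of_hasCompactSupport
      (hsupp.deriv.comp_left (g := (· ^ 2)) (zero_pow two_ne_zero)).mul_left
  have hφu' : Integrable fun x ↦ φ (u x) * deriv u x :=
    (hφu.mul hu').integrable_of_hasCompactSupport hφu_supp.mul_right
  have htotal := integral_eq_zero_of_hasDerivAt_of_integrable
    (hasDerivAt_comp_mul_deriv (hφ.differentiable one_ne_zero) hφ0 hu hw) (hφw.add hφ'u') hφu'
  rw [integral_add hφw hφ'u'] at htotal
  rw [setIntegral_eq_integral_of_forall_compl_eq_zero hzero, eq_neg_of_add_eq_zero_left htotal]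

lemma setIntegral_comp_mul_nonpos {φ : ℝ → ℝ} (hφ : ContDiff ℝ 1 φ) (hφ0 : φ 0 = 0)
    (hφ_mono : Monotone φ) (hu : ContDiff ℝ 1 u) (hsupp : HasCompactSupport u)
    (hw : ∀ x ∈ support u, HasDerivAt (deriv u) (w x) x) (hwi : IntegrableOn w (support u)) :
    ∫ x in support u, φ (u x) * w x ≤ 0 := by
  rw [setIntegral_comp_mul_eq_neg_integral_deriv_comp_mul_sq hφ hφ0 hu hsupp hw hwi, neg_nonpos]
  exact integral_nonneg fun x ↦ mul_nonneg hφ_mono.deriv_nonneg (sq_nonneg _)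

/-- **Kato's inequality** in one dimension. -/
lemma setIntegral_sign_mul_nonpos (hu : ContDiff ℝ 1 u) (hsupp : HasCompactSupport u)
    (hw : ∀ x ∈ support u, HasDerivAt (deriv u) (w x) x) (hwi : IntegrableOn w (support u)) :
    ∫ x in support u, Real.sign (u x) * w x ≤ 0 := by
  have hlim : Tendsto (fun r : ℝ ↦ ∫ x in support u, Real.arctan (r * u x) * w x) atTop
      (𝓝 (∫ x in support u, Real.pi / 2 * Real.sign (u x) * w x)) := by
    have hcont (r : ℝ) : Continuous fun x ↦ Real.arctan (r * u x) :=
      Real.continuous_arctan.comp (hu.continuous.const_mul r)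
    refine tendsto_integral_filter_of_dominated_convergence (fun x ↦ Real.pi / 2 * |w x|)
      (.of_forall fun r ↦ (hcont r).aestronglyMeasurable.mul hwi.aestronglyMeasurable)
      (.of_forall fun r ↦ .of_forall fun x ↦ ?_) (hwi.abs.const_mul _)
      (.of_forall fun x ↦ (tendsto_arctan_mul_atTop (u x)).mul_const (w x))
    rw [Real.norm_eq_abs, abs_mul]
    exact mul_le_mul_of_nonneg_right (abs_arctan_le_pi_div_two _) (abs_nonneg _)
  have hle : ∀ᶠ r : ℝ in atTop, ∫ x in support u, Real.arctan (r * u x) * w x ≤ 0 := by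
    filter_upwards [eventually_ge_atTop 0] with r hr
    exact setIntegral_comp_mul_nonpos (φ := fun t ↦ Real.arctan (r * t))
      (Real.contDiff_arctan.comp (contDiff_const.mul contDiff_id)) (by simp)
      (Real.arctan_mono.comp (monotone_id.const_mul hr)) hu hsupp hw hwi
  have hscaled := le_of_tendsto hlim hle
  simp only [mul_assoc, integral_const_mul] at hscaled
  exact nonpos_of_mul_nonpos_right hscaled Real.pi_div_two_pos

end Kato

lemma mul_measureReal_support_le_setIntegral_abs {γ : ℝ} {f u : ℝ → ℝ}
    (hf : IntegrableOn f (support u)) (hu : ContDiff ℝ 1 u) (hsupp : HasCompactSupport u)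
    (hpde : ∀ x ∈ support u, HasDerivAt (deriv u) (-f x + γ * Real.sign (u x)) x) :
    γ * volume.real (support u) ≤ ∫ x in support u, |f x| := by
  have : IsFiniteMeasure (volume.restrict (support u)) :=
    isFiniteMeasure_restrict_support_of_hasCompactSupport hsupp
  have hsign_le : ∀ᵐ x ∂volume.restrict (support u), ‖Real.sign (u x)‖ ≤ 1 :=
    .of_forall fun x ↦ abs_real_sign_le_one (u x)
  have hsign_meas : AEStronglyMeasurable (fun x ↦ Real.sign (u x))
      (volume.restrict (support u)) :=
    (measurable_real_sign.comp hu.continuous.measurable).aestronglyMeasurable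
  have hw : IntegrableOn (fun x ↦ -f x + γ * Real.sign (u x)) (support u) :=
    hf.neg.add ((Integrable.of_bound hsign_meas 1 hsign_le).const_mul γ)
  have hpointwise : ∀ x ∈ support u,
      γ - |f x| ≤ Real.sign (u x) * (-f x + γ * Real.sign (u x)) := fun x hx ↦ by
    rcases Real.sign_apply_eq_of_ne_zero (u x) hx with h | h <;> rw [h] <;>
      linarith [neg_abs_le (f x), le_abs_self (f x)]
  have hkato : ∫ x in support u, (γ - |f x|) ≤ 0 :=
    (setIntegral_mono_on ((integrable_const γ).sub hf.abs) (hw.bdd_mul hsign_meas hsign_le)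
      hu.continuous.isOpen_support.measurableSet hpointwise).trans
      (setIntegral_sign_mul_nonpos hu hsupp hpde hw)
  rw [integral_sub (integrable_const γ) hf.abs, setIntegral_const, smul_eq_mul] at hkato
  linarith

theorem stmt_5_general (γ α β : ℝ) (hαβ : α + β = 1)
    (f u : ℝ → ℝ) (hf : IntegrableOn f {y : ℝ | u y ≠ 0})
    (hu : ContDiff ℝ 1 u) (hsupp : HasCompactSupport u)
    (hpde : ∀ x ∈ {y : ℝ | u y ≠ 0},
      HasDerivAt (deriv u) (-f x + γ * Real.sign (u x)) x) :
    α * γ * (volume {y : ℝ | u y ≠ 0}).toReal ≤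
      ∫ x in {y : ℝ | u y ≠ 0}, max (|f x| - β * γ) 0 := by
  change α * γ * volume.real (support u) ≤ ∫ x in support u, max (|f x| - β * γ) 0
  have : IsFiniteMeasure (volume.restrict (support u)) :=
    isFiniteMeasure_restrict_support_of_hasCompactSupport hsupp
  have hbound := mul_measureReal_support_le_setIntegral_abs hf hu hsupp hpde
  have hsplit := integral_le_integral_pos_part_sub_const_add
    (μ := volume.restrict (support u)) hf.abs (β * γ)
  rw [measureReal_restrict_apply_univ] at hsplit
  rw [eq_sub_of_add_eq hαβ]
  linarith

/-- **Refined support size bound, elliptic case.** If `γ > 0`, `α, β ≥ 0` with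
`α + β = 1` and `α > 0`, `f` integrable, and `u` is `C¹` with compact support,
twice differentiable on `U = {u ≠ 0}` with `u'' = −f + γ sign u` there, then
`αγ · μ(U) ≤ ∫ (|f| − βγ)⁺`. -/
theorem stmt_5 (γ α β : ℝ) (hγ : 0 < γ) (hα : 0 ≤ α) (hβ : 0 ≤ β)
    (hαβ : α + β = 1) (hα' : 0 < α)
    (f : ℝ → ℝ) (hf : Integrable f)
    (u : ℝ → ℝ) (hu : ContDiff ℝ 1 u) (hsupp : HasCompactSupport u)
    (hpde : ∀ x ∈ {y : ℝ | u y ≠ 0},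
      HasDerivAt (deriv u) (-f x + γ * Real.sign (u x)) x) :
    α * γ * (volume {y : ℝ | u y ≠ 0}).toReal ≤ ∫ x, max (|f x| - β * γ) 0 :=
  (stmt_5_general γ α β hαβ f u hf.integrableOn hu hsupp hpde).trans <|
    setIntegral_le_integral (integrable_pos_part_sub_const hf.abs (mul_nonneg hβ hγ.le))
      (.of_forall fun _ ↦ le_max_right _ _)
end

section
/- Let γ > 0 and f : ℝ → ℝ with sup_x |f(x)| < γ. Let u : ℝ → ℝ be continuously differentiable with compact support, twice differentiable on {x : u(x) ≠ 0}, and satisfy u''(x) = −f(x) + γ·sign(u(x)) for every x with u(x) ≠ 0. Then u ≡ 0. -/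
open MeasureTheory

/-!
This is a maximum principle. On `{u > 0}` the equation gives `u'' = γ - f > 0`, while a continuous
function vanishing at infinity that is positive somewhere attains a positive maximum, where
`u'' ≤ 0`. Hence `u ≤ 0`, and the same argument for `-u` gives `u ≥ 0`.
-/

open Filter Topology

section MaximumPrinciple

variable {u : ℝ → ℝ} {c : ℝ}

theorem deriv_deriv_nonpos_of_isLocalMax {x : ℝ} (hmax : IsLocalMax u x) (hu : ContinuousAt u x) :
    deriv (deriv u) x ≤ 0 := by
  by_contra! hpos
  have hmin : IsLocalMin u x := isLocalMin_of_deriv_deriv_pos hpos hmax.deriv_eq_zero hu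
  have hconst : u =ᶠ[𝓝 x] fun _ ↦ u x := by
    filter_upwards [hmax, hmin] with y hle hge using le_antisymm hle hge
  have hzero : deriv (deriv u) x = 0 := by simpa using hconst.deriv.deriv_eq
  exact hpos.ne' hzero

theorem le_of_tendsto_cocompact_of_deriv_deriv_pos (hu : Continuous u)
    (hlim : Tendsto u (cocompact ℝ) (𝓝 c)) (hpos : ∀ x, c < u x → 0 < deriv (deriv u) x) (x : ℝ) :
    u x ≤ c := by
  by_contra! hx
  obtain ⟨m, hm⟩ : ∃ m, ∀ y, u y ≤ u m :=
    hu.exists_forall_ge' x (hlim.eventually_le_const hx)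
  have hmax : IsLocalMax u m := .of_forall hm
  exact (hpos m (hx.trans_le (hm x))).not_ge
    (deriv_deriv_nonpos_of_isLocalMax hmax hu.continuousAt)

theorem ge_of_tendsto_cocompact_of_deriv_deriv_neg (hu : Continuous u)
    (hlim : Tendsto u (cocompact ℝ) (𝓝 c)) (hneg : ∀ x, u x < c → deriv (deriv u) x < 0) (x : ℝ) :
    c ≤ u x := by
  refine neg_le_neg_iff.mp (le_of_tendsto_cocompact_of_deriv_deriv_pos hu.neg hlim.neg ?_ x)
  intro y hy
  simpa using hneg y (neg_lt_neg_iff.mp hy)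

end MaximumPrinciple

/-- No junk value of `deriv u` enters `hpde`: its right-hand side is nonzero because `|f x| < γ`, so
`deriv u ≠ 0` near `x` except possibly at `x`, and `u` is differentiable there; continuity of `u`
and of `deriv u` at `x` then gives differentiability at `x` itself. -/
theorem stmt_6_general {γ : ℝ} {f u : ℝ → ℝ} (hf : ∀ x, |f x| < γ) (hu : Continuous u)
    (hlim : Tendsto u (cocompact ℝ) (𝓝 0))
    (hpde : ∀ x, u x ≠ 0 → HasDerivAt (deriv u) (-f x + γ * Real.sign (u x)) x) (x : ℝ) :
    u x = 0 := by
  apply le_antisymm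
  · refine le_of_tendsto_cocompact_of_deriv_deriv_pos hu hlim (fun y hy ↦ ?_) x
    rw [(hpde y hy.ne').deriv, Real.sign_of_pos hy]
    linarith [(abs_lt.mp (hf y)).2]
  · refine ge_of_tendsto_cocompact_of_deriv_deriv_neg hu hlim (fun y hy ↦ ?_) x
    rw [(hpde y hy.ne).deriv, Real.sign_of_neg hy]
    linarith [(abs_lt.mp (hf y)).1]

/-- If `sup_x |f x| < γ` and `u` is `C¹` with compact support, twice differentiable on
`{u ≠ 0}` with `u'' = −f + γ sign u` there, then `u ≡ 0`. -/
theorem stmt_6 (γ : ℝ) (hγ : 0 < γ) (f : ℝ → ℝ)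
    (hf : ∃ c : ℝ, c < γ ∧ ∀ x, |f x| ≤ c)
    (u : ℝ → ℝ) (hu : ContDiff ℝ 1 u) (hsupp : HasCompactSupport u)
    (hpde : ∀ x, u x ≠ 0 →
      HasDerivAt (deriv u) (-f x + γ * Real.sign (u x)) x) :
    ∀ x, u x = 0 := by
  obtain ⟨c, hc, hfc⟩ := hf
  exact stmt_6_general (fun x ↦ (hfc x).trans_lt hc) hu.continuous hsupp.is_zero_at_infty hpde
end

section
/- (Support size bound, parabolic case.) Let γ > 0, T > 0, α, β ≥ 0 with α + β = 1 and α > 0, and let f : ℝ → ℝ be integrable and g : ℝ → ℝ be integrable. Let u : ℝ × [0,T] → ℝ be continuous, supported in K × [0,T] for a fixed compact set K, continuously differentiable in t and twice continuously differentiable in x on the open set W = {(x,t) : u(x,t) ≠ 0}, continuously differentiable in x everywhere, with u(·,0) = g, and satisfying ∂_t u = ∂²_x u + f − γ·sign(u) on W. Then αγ · μ₂(W) ≤ ∫_ℝ |g(x)| dx + ∫₀^T ∫_ℝ (|f(x)| − βγ)⁺ dx dt, where μ₂ is two-dimensional Lebesgue measure on spacetime and (r)⁺ = max(r, 0). -/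
open MeasureTheory Set

/-!
Multiplying the equation by `sign u` and integrating over `ℝ × [0, T]`, the time derivative
integrates to `∫ |u(·, T)| - ∫ |g| ≥ -∫ |g|`, the diffusion term has the good sign, and
`sign u · f - γ ≤ (|f| - βγ)⁺ - αγ` on `W`. To make this rigorous, `sign` is replaced by smooth
truncations `η` vanishing near `0`: then `∫ η(u) ∂²ₓu = -∫ η'(u) (∂ₓu)² ≤ 0`, and `∫ η(u) ∂ₜu` is
the increment of a primitive of `η`, which lies between `0` and `|·|`. Along truncations converging
to `sign`, `∫ |η(u)|` tends to the measure of `W`.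
-/

open Filter Topology

/-- A smooth truncation of the sign function: a nondecreasing `C¹` function with values in
`[-1, 1]` that vanishes in a neighbourhood of `0`. Composing it with `u` gives a test function
supported off the zero set of `u`, where the equation holds. -/
structure IsSignCutoff (η : ℝ → ℝ) : Prop where
  contDiff : ContDiff ℝ 1 η
  monotone : Monotone η
  eventuallyEq_zero : η =ᶠ[𝓝 0] 0
  abs_le_one : ∀ r, |η r| ≤ 1

namespace IsSignCutoff

variable {η : ℝ → ℝ}

lemma continuous (hη : IsSignCutoff η) : Continuous η := hη.contDiff.continuous

lemma hasDerivAt (hη : IsSignCutoff η) (r : ℝ) : HasDerivAt η (deriv η r) r :=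
  (hη.contDiff.differentiable one_ne_zero r).hasDerivAt

lemma map_zero (hη : IsSignCutoff η) : η 0 = 0 := hη.eventuallyEq_zero.self_of_nhds

lemma eq_abs_mul_sign (hη : IsSignCutoff η) (r : ℝ) : η r = |η r| * Real.sign r := by
  rcases lt_trichotomy r 0 with hr | rfl | hr
  · have : η r ≤ 0 := hη.map_zero ▸ hη.monotone hr.le
    rw [Real.sign_of_neg hr, abs_of_nonpos this, neg_mul_neg, mul_one]
  · rw [hη.map_zero, Real.sign_zero, mul_zero]
  · have : 0 ≤ η r := hη.map_zero ▸ hη.monotone hr.le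
    rw [Real.sign_of_pos hr, abs_of_nonneg this, mul_one]

lemma comp_const_mul (hη : IsSignCutoff η) {k : ℝ} (hk : 0 ≤ k) :
    IsSignCutoff fun r => η (k * r) where
  contDiff := hη.contDiff.comp (contDiff_const.mul contDiff_id)
  monotone := hη.monotone.comp fun _ _ h => mul_le_mul_of_nonneg_left h hk
  eventuallyEq_zero :=
    hη.eventuallyEq_zero.comp_tendsto ((continuous_const_mul k).tendsto' 0 0 (mul_zero k))
  abs_le_one r := hη.abs_le_one (k * r)

lemma continuousOn_comp_mul {X : Type*} [TopologicalSpace X] (hη : IsSignCutoff η)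
    {v w : X → ℝ} {s : Set X} (hv : ContinuousOn v s) (hw : ContinuousOn w {x ∈ s | v x ≠ 0}) :
    ContinuousOn (fun x => η (v x) * w x) s := by
  intro x hx
  by_cases hvx : v x = 0
  · refine (continuousWithinAt_const (b := (0 : ℝ))).congr_of_eventuallyEq ?_ ?_
    · filter_upwards [hη.eventuallyEq_zero.comp_tendsto (hvx ▸ (hv x hx).tendsto)] with y hy
      rw [show η (v y) = 0 from hy, zero_mul]
    · rw [hvx, hη.map_zero, zero_mul]
  · have hne : {y | v y ≠ 0} ∈ 𝓝[s] x := (hv x hx).eventually_ne hvx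
    exact (hη.continuous.comp_continuousOn hv x hx).mul
      ((continuousWithinAt_inter' hne).1 (hw x ⟨hx, hvx⟩))

lemma hasDerivAt_comp_mul_deriv (hη : IsSignCutoff η) {v v' v'' : ℝ → ℝ} {x : ℝ}
    (hv : HasDerivAt v (v' x) x) (hv' : v x ≠ 0 → HasDerivAt v' (v'' x) x) :
    HasDerivAt (fun y => η (v y) * v' y)
      (deriv η (v x) * v' x * v' x + η (v x) * v'' x) x := by
  by_cases hvx : v x = 0
  · have hzero : (fun y => η (v y) * v' y) =ᶠ[𝓝 x] fun _ => 0 := by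
      filter_upwards [hη.eventuallyEq_zero.comp_tendsto (hvx ▸ hv.continuousAt.tendsto)] with y hy
      rw [show η (v y) = 0 from hy, zero_mul]
    have hderiv : deriv η 0 = 0 := by
      rw [hη.eventuallyEq_zero.deriv_eq]
      exact deriv_const 0 0
    simpa only [hvx, hderiv, hη.map_zero, zero_mul, add_zero] using
      (hasDerivAt_const x (0 : ℝ)).congr_of_eventuallyEq hzero
  · exact ((hη.hasDerivAt (v x)).comp x hv).mul (hv' hvx)

lemma setIntegral_comp_mul_deriv_deriv_nonpos (hη : IsSignCutoff η) {v v' v'' : ℝ → ℝ} {a b : ℝ}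
    (hab : a ≤ b) (hva : v a = 0) (hvb : v b = 0) (hv : ∀ x, HasDerivAt v (v' x) x)
    (hv' : Continuous v') (hv'' : ∀ x, v x ≠ 0 → HasDerivAt v' (v'' x) x)
    (hv''_cont : ContinuousOn v'' {x | v x ≠ 0}) :
    ∫ x in Icc a b, η (v x) * v'' x ≤ 0 := by
  have hv_cont : Continuous v := continuous_iff_continuousAt.2 fun x => (hv x).continuousAt
  have hdiss : Continuous fun x => deriv η (v x) * v' x * v' x :=
    (((hη.contDiff.continuous_deriv le_rfl).comp hv_cont).mul hv').mul hv'
  have hdiff : Continuous fun x => η (v x) * v'' x :=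
    continuousOn_univ.1 (hη.continuousOn_comp_mul hv_cont.continuousOn (by simpa using hv''_cont))
  rw [integral_Icc_eq_integral_Ioc, ← intervalIntegral.integral_of_le hab]
  calc ∫ x in a..b, η (v x) * v'' x
      ≤ ∫ x in a..b, (deriv η (v x) * v' x * v' x + η (v x) * v'' x) := by
        refine intervalIntegral.integral_mono_on hab (hdiff.intervalIntegrable a b)
          ((hdiss.add hdiff).intervalIntegrable a b) fun x _ => ?_
        rw [mul_assoc]
        exact le_add_of_nonneg_left
          (mul_nonneg hη.monotone.deriv_nonneg (mul_self_nonneg _))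
    _ = η (v b) * v' b - η (v a) * v' a :=
        intervalIntegral.integral_eq_sub_of_hasDerivAt
          (fun x _ => hη.hasDerivAt_comp_mul_deriv (hv x) (hv'' x))
          ((hdiss.add hdiff).intervalIntegrable a b)
    _ = 0 := by rw [hva, hvb, hη.map_zero, zero_mul, zero_mul, sub_zero]

lemma hasDerivAt_primitive (hη : IsSignCutoff η) (r : ℝ) :
    HasDerivAt (fun r => ∫ s in (0 : ℝ)..r, η s) (η r) r :=
  (hη.continuous.integral_hasStrictDerivAt 0 r).hasDerivAt

lemma primitive_nonneg (hη : IsSignCutoff η) (r : ℝ) : 0 ≤ ∫ s in (0 : ℝ)..r, η s := by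
  rcases le_total 0 r with hr | hr
  · exact intervalIntegral.integral_nonneg hr fun s hs => hη.map_zero ▸ hη.monotone hs.1
  · rw [intervalIntegral.integral_symm, Left.nonneg_neg_iff, ← neg_nonneg,
      ← intervalIntegral.integral_neg]
    exact intervalIntegral.integral_nonneg hr fun s hs =>
      neg_nonneg.2 (hη.map_zero ▸ hη.monotone hs.2)

lemma primitive_le_abs (hη : IsSignCutoff η) (r : ℝ) : ∫ s in (0 : ℝ)..r, η s ≤ |r| := by
  have h : ‖∫ s in (0 : ℝ)..r, η s‖ ≤ 1 * |r - 0| :=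
    intervalIntegral.norm_integral_le_of_norm_le_const fun s _ => hη.abs_le_one s
  rw [one_mul, sub_zero] at h
  exact (le_abs_self _).trans h

lemma primitive_eventuallyEq_zero (hη : IsSignCutoff η) :
    (fun r => ∫ s in (0 : ℝ)..r, η s) =ᶠ[𝓝 0] 0 := by
  obtain ⟨δ, hδ, hball⟩ := Metric.eventually_nhds_iff_ball.1 hη.eventuallyEq_zero
  filter_upwards [Metric.ball_mem_nhds 0 hδ] with r hr
  have hsub : uIcc 0 r ⊆ Metric.ball 0 δ :=
    (convex_ball (0 : ℝ) δ).ordConnected.uIcc_subset (Metric.mem_ball_self hδ) hr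
  rw [intervalIntegral.integral_congr fun s hs => hball s (hsub hs)]
  exact intervalIntegral.integral_zero

lemma neg_abs_le_setIntegral_of_mul_deriv_le (hη : IsSignCutoff η) {w w' k : ℝ → ℝ} {a b : ℝ}
    (hab : a ≤ b) (hw_cont : Continuous w)
    (hw : ∀ t ∈ Icc a b, w t ≠ 0 → HasDerivAt w (w' t) t)
    (hk_int : IntegrableOn k (Icc a b)) (hk : ∀ t ∈ Icc a b, η (w t) * w' t ≤ k t) :
    -|w a| ≤ ∫ t in Icc a b, k t := by
  set Φ : ℝ → ℝ := fun r => ∫ s in (0 : ℝ)..r, η s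
  have hΦ_cont : Continuous Φ :=
    continuous_iff_continuousAt.2 fun r => (hη.hasDerivAt_primitive r).continuousAt
  have hΦw : ∀ t ∈ Icc a b, HasDerivAt (fun s => Φ (w s)) (η (w t) * w' t) t := by
    intro t ht
    by_cases hwt : w t = 0
    · have hzero : (fun s => Φ (w s)) =ᶠ[𝓝 t] fun _ => 0 :=
        hη.primitive_eventuallyEq_zero.comp_tendsto (hwt ▸ hw_cont.tendsto t)
      simpa only [hwt, hη.map_zero, zero_mul] using
        (hasDerivAt_const t (0 : ℝ)).congr_of_eventuallyEq hzero
    · exact (hη.hasDerivAt_primitive (w t)).comp t (hw t ht hwt)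
  calc -|w a| ≤ Φ (w b) - Φ (w a) := by
        linarith [hη.primitive_nonneg (w b), hη.primitive_le_abs (w a)]
    _ ≤ ∫ t in a..b, k t :=
        intervalIntegral.sub_le_integral_of_hasDeriv_right_of_le hab
          (hΦ_cont.comp hw_cont).continuousOn
          (fun t ht => (hΦw t (Ioo_subset_Icc_self ht)).hasDerivWithinAt) hk_int
          (fun t ht => hk t (Ioo_subset_Icc_self ht))
    _ = ∫ t in Icc a b, k t := by
        rw [integral_Icc_eq_integral_Ioc, intervalIntegral.integral_of_le hab]

end IsSignCutoff

/-- An odd smooth transition from `-1` on `(-∞, -2]` through `0` on `[-1, 1]` to `1` on `[2, ∞)`;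
its dilations `r ↦ smoothSign (n * r)` approximate the sign function. -/
noncomputable def smoothSign (r : ℝ) : ℝ :=
  Real.smoothTransition (r - 1) - Real.smoothTransition (-r - 1)

lemma isSignCutoff_smoothSign : IsSignCutoff smoothSign where
  contDiff :=
    (Real.smoothTransition.contDiff.comp (contDiff_id.sub contDiff_const)).sub
      (Real.smoothTransition.contDiff.comp (contDiff_id.neg.sub contDiff_const))
  monotone r s hrs :=
    sub_le_sub (Real.smoothTransition.monotone (by linarith))
      (Real.smoothTransition.monotone (by linarith))
  eventuallyEq_zero := by
    filter_upwards [Ioo_mem_nhds (neg_one_lt_zero (R := ℝ)) one_pos] with r hr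
    simp only [smoothSign, Pi.zero_apply]
    rw [Real.smoothTransition.zero_of_nonpos (by linarith [hr.2]),
      Real.smoothTransition.zero_of_nonpos (by linarith [hr.1]), sub_zero]
  abs_le_one _ :=
    abs_sub_le_of_nonneg_of_le (Real.smoothTransition.nonneg _) (Real.smoothTransition.le_one _)
      (Real.smoothTransition.nonneg _) (Real.smoothTransition.le_one _)

lemma abs_smoothSign_of_two_le_abs {r : ℝ} (hr : 2 ≤ |r|) : |smoothSign r| = 1 := by
  rcases le_abs.1 hr with h | h
  · rw [smoothSign, Real.smoothTransition.one_of_one_le (by linarith),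
      Real.smoothTransition.zero_of_nonpos (by linarith), sub_zero, abs_one]
  · rw [smoothSign, Real.smoothTransition.zero_of_nonpos (by linarith),
      Real.smoothTransition.one_of_one_le (by linarith), zero_sub, abs_neg, abs_one]

lemma tendsto_abs_smoothSign_natCast_mul (r : ℝ) :
    Tendsto (fun n : ℕ => |smoothSign (n * r)|) atTop (𝓝 (({0}ᶜ : Set ℝ).indicator 1 r)) := by
  rcases eq_or_ne r 0 with rfl | hr
  · simp [isSignCutoff_smoothSign.map_zero]
  · rw [indicator_of_mem (mem_compl_singleton_iff.2 hr), Pi.one_apply]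
    refine tendsto_const_nhds.congr' ?_
    have hlarge := tendsto_natCast_atTop_atTop.atTop_mul_const (abs_pos.2 hr)
    filter_upwards [hlarge.eventually_ge_atTop 2] with n hn
    rw [abs_smoothSign_of_two_le_abs (by rwa [abs_mul, Nat.abs_cast])]

lemma tendsto_integral_abs_smoothSign_natCast_mul {X : Type*} [MeasurableSpace X] {μ : Measure X}
    [IsFiniteMeasure μ] {v : X → ℝ} (hv : Measurable v) :
    Tendsto (fun n : ℕ => ∫ x, |smoothSign (n * v x)| ∂μ) atTop (𝓝 (μ.real {x | v x ≠ 0})) := by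
  have hne : MeasurableSet {x | v x ≠ 0} := hv (measurableSet_singleton 0).compl
  rw [← integral_indicator_one hne]
  refine tendsto_integral_of_dominated_convergence (fun _ => 1) (fun n => ?_)
    (integrable_const 1) (fun n => ?_) ?_
  · exact (isSignCutoff_smoothSign.continuous.measurable.comp
      (hv.const_mul (n : ℝ))).abs.aestronglyMeasurable
  · exact Eventually.of_forall fun x => by
      simpa only [Real.norm_eq_abs, abs_abs] using isSignCutoff_smoothSign.abs_le_one (n * v x)
  · exact Eventually.of_forall fun x => tendsto_abs_smoothSign_natCast_mul (v x)

/-- `u` is a classical solution of `sign u · ∂ₜu ≤ sign u · ∂²ₓu + h - c` off its zero set in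
`ℝ × [0, T]`, that is, `|u|` is a subsolution of the heat equation with source `h - c` there;
`ut`, `ux` and `uxx` stand for the derivatives of `u`. Across the zero set only `u` and `∂ₓu` are
continuous. -/
structure IsAbsSubsolution (T c : ℝ) (h u ut ux uxx : ℝ → ℝ → ℝ) : Prop where
  continuous : Continuous fun p : ℝ × ℝ => u p.1 p.2
  hasDerivAt_dx : ∀ x t, HasDerivAt (fun y => u y t) (ux x t) x
  continuous_dx : Continuous fun p : ℝ × ℝ => ux p.1 p.2
  hasDerivAt_dt : ∀ x, ∀ t ∈ Icc 0 T, u x t ≠ 0 → HasDerivAt (u x) (ut x t) t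
  hasDerivAt_dxx : ∀ x, ∀ t ∈ Icc 0 T, u x t ≠ 0 → HasDerivAt (fun y => ux y t) (uxx x t) x
  continuousOn_dxx :
    ContinuousOn (fun p : ℝ × ℝ => uxx p.1 p.2) {p | p.2 ∈ Icc 0 T ∧ u p.1 p.2 ≠ 0}
  sign_mul_dt_le : ∀ x, ∀ t ∈ Icc 0 T, u x t ≠ 0 →
    Real.sign (u x t) * ut x t ≤ Real.sign (u x t) * uxx x t + h x t - c

namespace IsAbsSubsolution

variable {T c a b : ℝ} {h u ut ux uxx : ℝ → ℝ → ℝ} {η : ℝ → ℝ}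

lemma cutoff_mul_dt_le (hu : IsAbsSubsolution T c h u ut ux uxx) (hh : ∀ x t, 0 ≤ h x t)
    (hη : IsSignCutoff η) {t : ℝ} (ht : t ∈ Icc 0 T) (x : ℝ) :
    η (u x t) * ut x t ≤ η (u x t) * uxx x t + h x t - c * |η (u x t)| := by
  by_cases hux : u x t = 0
  · simpa only [hux, hη.map_zero, zero_mul, abs_zero, mul_zero, zero_add, sub_zero] using hh x t
  · have hsub := mul_le_mul_of_nonneg_left (hu.sign_mul_dt_le x t ht hux) (abs_nonneg (η (u x t)))
    have hsource : |η (u x t)| * h x t ≤ h x t :=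
      mul_le_of_le_one_left (hh x t) (hη.abs_le_one (u x t))
    linear_combination hsub + hsource + (ut x t - uxx x t) * hη.eq_abs_mul_sign (u x t)

lemma integrableOn_cutoff_mul_dxx (hu : IsAbsSubsolution T c h u ut ux uxx) (hη : IsSignCutoff η)
    (a b : ℝ) :
    IntegrableOn (fun p : ℝ × ℝ => η (u p.1 p.2) * uxx p.1 p.2) (Icc a b ×ˢ Icc 0 T) := by
  have hcont : ContinuousOn (fun p : ℝ × ℝ => η (u p.1 p.2) * uxx p.1 p.2) {p | p.2 ∈ Icc 0 T} :=
    hη.continuousOn_comp_mul hu.continuous.continuousOn hu.continuousOn_dxx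
  exact (hcont.mono fun p hp => hp.2).integrableOn_compact (isCompact_Icc.prod isCompact_Icc)

lemma setIntegral_cutoff_mul_dxx_nonpos (hu : IsAbsSubsolution T c h u ut ux uxx)
    (hη : IsSignCutoff η) (hab : a ≤ b) (hua : ∀ t, u a t = 0) (hub : ∀ t, u b t = 0) :
    ∫ p in Icc a b ×ˢ Icc 0 T, η (u p.1 p.2) * uxx p.1 p.2 ≤ 0 := by
  have hint := hu.integrableOn_cutoff_mul_dxx hη a b
  rw [IntegrableOn, Measure.volume_eq_prod, ← Measure.prod_restrict] at hint
  rw [Measure.volume_eq_prod, ← Measure.prod_restrict, integral_prod_symm _ hint]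
  refine setIntegral_nonpos measurableSet_Icc fun t ht => ?_
  have hslice : Continuous fun x : ℝ => (x, t) := Continuous.prodMk_left t
  exact hη.setIntegral_comp_mul_deriv_deriv_nonpos hab (hua t) (hub t)
    (fun x => hu.hasDerivAt_dx x t) (hu.continuous_dx.comp hslice)
    (fun x => hu.hasDerivAt_dxx x t ht)
    (hu.continuousOn_dxx.comp hslice.continuousOn fun x hx => ⟨ht, hx⟩)

lemma neg_integral_abs_initial_le (hu : IsAbsSubsolution T c h u ut ux uxx) (hT : 0 ≤ T)
    {k : ℝ × ℝ → ℝ} (hη : IsSignCutoff η)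
    (hk : ∀ x, ∀ t ∈ Icc 0 T, η (u x t) * ut x t ≤ k (x, t))
    (hk_int : IntegrableOn k (Icc a b ×ˢ Icc 0 T)) :
    -∫ x in Icc a b, |u x 0| ≤ ∫ p in Icc a b ×ˢ Icc 0 T, k p := by
  have hk_int' : Integrable k ((volume.restrict (Icc a b)).prod (volume.restrict (Icc 0 T))) := by
    rwa [Measure.prod_restrict, ← Measure.volume_eq_prod]
  have hinit : Continuous fun x => -|u x 0| :=
    (hu.continuous.comp (Continuous.prodMk_left 0)).abs.neg
  rw [Measure.volume_eq_prod, setIntegral_prod k hk_int, ← integral_neg]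
  refine integral_mono_ae (hinit.integrableOn_Icc) hk_int'.integral_prod_left ?_
  filter_upwards [hk_int'.prod_right_ae] with x hx
  exact hη.neg_abs_le_setIntegral_of_mul_deriv_le hT
    (hu.continuous.comp (Continuous.prodMk_right x)) (hu.hasDerivAt_dt x) hx (hk x)

lemma mul_setIntegral_abs_cutoff_le (hu : IsAbsSubsolution T c h u ut ux uxx) (hT : 0 ≤ T)
    (hh : ∀ x t, 0 ≤ h x t)
    (hh_int : IntegrableOn (fun p : ℝ × ℝ => h p.1 p.2) (Icc a b ×ˢ Icc 0 T))
    (hη : IsSignCutoff η) (hab : a ≤ b) (hua : ∀ t, u a t = 0) (hub : ∀ t, u b t = 0) :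
    c * ∫ p in Icc a b ×ˢ Icc 0 T, |η (u p.1 p.2)| ≤
      (∫ x in Icc a b, |u x 0|) + ∫ p in Icc a b ×ˢ Icc 0 T, h p.1 p.2 := by
  have hdxx_int := hu.integrableOn_cutoff_mul_dxx hη a b
  have habs_int : IntegrableOn (fun p : ℝ × ℝ => |η (u p.1 p.2)|) (Icc a b ×ˢ Icc 0 T) :=
    (hη.continuous.comp hu.continuous).abs.continuousOn.integrableOn_compact
      (isCompact_Icc.prod isCompact_Icc)
  have hinit := hu.neg_integral_abs_initial_le hT hη
    (fun x t ht => hu.cutoff_mul_dt_le hh hη ht x)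
    ((hdxx_int.add hh_int).sub (habs_int.const_mul c))
  rw [integral_sub' (hdxx_int.add hh_int) (habs_int.const_mul c), integral_const_mul,
    integral_add' hdxx_int hh_int] at hinit
  linarith [hu.setIntegral_cutoff_mul_dxx_nonpos hη hab hua hub]

lemma mul_volume_le_of_eq_zero_off_Ioo (hu : IsAbsSubsolution T c h u ut ux uxx) (hT : 0 ≤ T)
    (hh : ∀ x t, 0 ≤ h x t)
    (hh_int : IntegrableOn (fun p : ℝ × ℝ => h p.1 p.2) (Icc a b ×ˢ Icc 0 T))
    (hab : a ≤ b) (hsupp : ∀ x t, x ∉ Ioo a b → u x t = 0) :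
    c * volume.real {p : ℝ × ℝ | p.2 ∈ Icc 0 T ∧ u p.1 p.2 ≠ 0} ≤
      (∫ x in Icc a b, |u x 0|) + ∫ p in Icc a b ×ˢ Icc 0 T, h p.1 p.2 := by
  have : IsFiniteMeasure ((volume : Measure (ℝ × ℝ)).restrict (Icc a b ×ˢ Icc 0 T)) :=
    isFiniteMeasure_restrict.2 (isCompact_Icc.prod isCompact_Icc).measure_lt_top.ne
  have hvolume : volume.real {p : ℝ × ℝ | p.2 ∈ Icc 0 T ∧ u p.1 p.2 ≠ 0} =
      (volume.restrict (Icc a b ×ˢ Icc 0 T)).real {p : ℝ × ℝ | u p.1 p.2 ≠ 0} := by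
    rw [measureReal_restrict_apply' (measurableSet_Icc.prod measurableSet_Icc)]
    congr 1
    ext p
    have hmem : u p.1 p.2 ≠ 0 → p.1 ∈ Icc a b := fun hp =>
      Ioo_subset_Icc_self (not_imp_comm.1 (hsupp p.1 p.2) hp)
    simp only [mem_ofPred_eq, mem_inter_iff, mem_prod]
    tauto
  rw [hvolume]
  refine le_of_tendsto ((tendsto_integral_abs_smoothSign_natCast_mul
    hu.continuous.measurable).const_mul c) (Eventually.of_forall fun n => ?_)
  exact hu.mul_setIntegral_abs_cutoff_le hT hh hh_int
    (isSignCutoff_smoothSign.comp_const_mul n.cast_nonneg) hab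
    (fun t => hsupp a t left_notMem_Ioo) (fun t => hsupp b t right_notMem_Ioo)

theorem mul_volume_le (hu : IsAbsSubsolution T c h u ut ux uxx) (hT : 0 ≤ T)
    (hh : ∀ x t, 0 ≤ h x t)
    (hh_int : IntegrableOn (fun p : ℝ × ℝ => h p.1 p.2) (univ ×ˢ Icc 0 T))
    {K : Set ℝ} (hK : Bornology.IsBounded K) (hsupp : ∀ x t, x ∉ K → u x t = 0) :
    c * volume.real {p : ℝ × ℝ | p.2 ∈ Icc 0 T ∧ u p.1 p.2 ≠ 0} ≤
      (∫ x, |u x 0|) + ∫ t in Icc 0 T, ∫ x, h x t := by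
  obtain ⟨R, hR, hKR⟩ := hK.subset_ball_lt 0 0
  rw [Real.ball_eq_Ioo, zero_sub, zero_add] at hKR
  have hsupp' : ∀ x t, x ∉ Ioo (-R) R → u x t = 0 := fun x t hx => hsupp x t fun h => hx (hKR h)
  have hsub : Icc (-R) R ×ˢ Icc 0 T ⊆ univ ×ˢ Icc 0 T := prod_mono_left (subset_univ _)
  have hinitial : ∫ x in Icc (-R) R, |u x 0| = ∫ x, |u x 0| :=
    setIntegral_eq_integral_of_forall_compl_eq_zero fun x hx => by
      rw [hsupp' x 0 fun h => hx (Ioo_subset_Icc_self h), abs_zero]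
  have hfubini : ∫ p in univ ×ˢ Icc 0 T, h p.1 p.2 = ∫ t in Icc 0 T, ∫ x, h x t := by
    rw [Measure.volume_eq_prod, IntegrableOn, ← Measure.prod_restrict, Measure.restrict_univ]
      at hh_int
    rw [Measure.volume_eq_prod, ← Measure.prod_restrict, Measure.restrict_univ,
      integral_prod_symm _ hh_int]
  calc c * volume.real {p : ℝ × ℝ | p.2 ∈ Icc 0 T ∧ u p.1 p.2 ≠ 0}
      ≤ (∫ x in Icc (-R) R, |u x 0|) + ∫ p in Icc (-R) R ×ˢ Icc 0 T, h p.1 p.2 :=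
        hu.mul_volume_le_of_eq_zero_off_Ioo hT hh (hh_int.mono_set hsub) (neg_lt_self hR).le hsupp'
    _ ≤ (∫ x, |u x 0|) + ∫ p in univ ×ˢ Icc 0 T, h p.1 p.2 := by
        rw [hinitial]
        exact add_le_add_right (setIntegral_mono_set hh_int
          (Eventually.of_forall fun p => hh p.1 p.2) hsub.eventuallyLE) _
    _ = (∫ x, |u x 0|) + ∫ t in Icc 0 T, ∫ x, h x t := by rw [hfubini]

end IsAbsSubsolution

lemma sign_mul_sub_le_max {α β γ r y : ℝ} (hαβ : α + β = 1) (hr : r ≠ 0) :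
    Real.sign r * (y - γ * Real.sign r) ≤ max (|y| - β * γ) 0 - α * γ := by
  have hsplit : γ = α * γ + β * γ := by rw [← add_mul, hαβ, one_mul]
  have hmax : |y| - β * γ ≤ max (|y| - β * γ) 0 := le_max_left _ _
  rcases Real.sign_apply_eq_of_ne_zero r hr with h | h <;> rw [h]
  · linarith [neg_le_abs y]
  · linarith [le_abs_self y]

lemma integrable_max_abs_sub_zero {X : Type*} [MeasurableSpace X] {μ : Measure X} {f : X → ℝ}
    (hf : Integrable f μ) {r : ℝ} (hr : 0 ≤ r) : Integrable (fun x => max (|f x| - r) 0) μ := by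
  refine hf.mono ((hf.1.norm.sub aestronglyMeasurable_const).sup aestronglyMeasurable_const)
    (Eventually.of_forall fun x => ?_)
  rw [Real.norm_of_nonneg (le_max_right _ _), Real.norm_eq_abs]
  exact max_le (sub_le_self _ hr) (abs_nonneg _)

lemma integrableOn_univ_prod_comp_fst {X Y : Type*} [MeasurableSpace X] [MeasurableSpace Y]
    {μ : Measure X} [SFinite μ] {ν : Measure Y} [SFinite ν] {f : X → ℝ} {s : Set Y}
    (hf : Integrable f μ) (hs : ν s ≠ ⊤) :
    IntegrableOn (fun p : X × Y => f p.1) (univ ×ˢ s) (μ.prod ν) := by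
  have : IsFiniteMeasure (ν.restrict s) := isFiniteMeasure_restrict.2 hs
  rw [IntegrableOn, ← Measure.prod_restrict, Measure.restrict_univ]
  exact hf.comp_fst _

theorem stmt_7_general {γ T α β : ℝ} (hT : 0 ≤ T) (hαβ : α + β = 1)
    {f : ℝ → ℝ → ℝ} {g : ℝ → ℝ}
    (hf : IntegrableOn (fun p : ℝ × ℝ => max (|f p.1 p.2| - β * γ) 0) (univ ×ˢ Icc 0 T))
    {u ut ux uxx : ℝ → ℝ → ℝ} {K : Set ℝ} (hK : Bornology.IsBounded K) {W : Set (ℝ × ℝ)}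
    (hW : W = {p : ℝ × ℝ | p.2 ∈ Icc (0 : ℝ) T ∧ u p.1 p.2 ≠ 0})
    (hu_cont : Continuous fun p : ℝ × ℝ => u p.1 p.2)
    (hu_supp : ∀ x t, x ∉ K → u x t = 0)
    (hut : ∀ p ∈ W, HasDerivAt (fun s => u p.1 s) (ut p.1 p.2) p.2)
    (huxx : ∀ p ∈ W, HasDerivAt (fun y => ux y p.2) (uxx p.1 p.2) p.1)
    (huxx_cont : ContinuousOn (fun p : ℝ × ℝ => uxx p.1 p.2) W)
    (hux : ∀ x t, HasDerivAt (fun y => u y t) (ux x t) x)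
    (hux_cont : Continuous fun p : ℝ × ℝ => ux p.1 p.2)
    (hu0 : ∀ x, u x 0 = g x)
    (hpde : ∀ p ∈ W, ut p.1 p.2 = uxx p.1 p.2 + f p.1 p.2 - γ * Real.sign (u p.1 p.2)) :
    α * γ * (volume W).toReal ≤
      (∫ x, |g x|) + ∫ t in Icc (0 : ℝ) T, ∫ x, max (|f x t| - β * γ) 0 := by
  subst hW
  have hu : IsAbsSubsolution T (α * γ) (fun x t => max (|f x t| - β * γ) 0) u ut ux uxx :=
    { continuous := hu_cont
      hasDerivAt_dx := hux
      continuous_dx := hux_cont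
      hasDerivAt_dt := fun x t ht hne => hut (x, t) ⟨ht, hne⟩
      hasDerivAt_dxx := fun x t ht hne => huxx (x, t) ⟨ht, hne⟩
      continuousOn_dxx := huxx_cont
      sign_mul_dt_le := fun x t ht hne => by
        rw [hpde (x, t) ⟨ht, hne⟩, add_sub_assoc, mul_add, add_sub_assoc]
        gcongr
        exact sign_mul_sub_le_max hαβ hne }
  simp only [← hu0]
  exact hu.mul_volume_le hT (fun x t => le_max_right _ _) hf hK hu_supp

/-- **Support size bound, parabolic case.** Let `W = {(x,t) ∈ ℝ × [0,T] : u(x,t) ≠ 0}`.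
If `u` solves `∂ₜu = ∂ₓₓu + f − γ sign u` on `W`, is supported in `K × [0,T]`,
is `C¹` in `x` everywhere, `C¹` in `t` and `C²` in `x` on `W`, with `u(·,0) = g`, then
`αγ · μ₂(W) ≤ ∫ |g| + ∫₀ᵀ ∫ (|f| − βγ)⁺`. -/
theorem stmt_7 (γ T α β : ℝ) (hγ : 0 < γ) (hT : 0 < T)
    (hα : 0 ≤ α) (hβ : 0 ≤ β) (hαβ : α + β = 1) (hα' : 0 < α)
    (f g : ℝ → ℝ) (hf : Integrable f) (hg : Integrable g)
    (u ut ux uxx : ℝ → ℝ → ℝ)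
    (K : Set ℝ) (hK : IsCompact K)
    (W : Set (ℝ × ℝ))
    (hW : W = {p : ℝ × ℝ | p.2 ∈ Icc (0 : ℝ) T ∧ u p.1 p.2 ≠ 0})
    -- continuity of u
    (hu_cont : Continuous fun p : ℝ × ℝ => u p.1 p.2)
    -- support in K × [0,T]
    (hu_supp : ∀ x t, x ∉ K → u x t = 0)
    -- continuously differentiable in t and twice continuously differentiable in x on W
    (hut : ∀ p ∈ W, HasDerivAt (fun s => u p.1 s) (ut p.1 p.2) p.2)
    (huxx : ∀ p ∈ W, HasDerivAt (fun y => ux y p.2) (uxx p.1 p.2) p.1)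
    (hut_cont : ContinuousOn (fun p : ℝ × ℝ => ut p.1 p.2) W)
    (huxx_cont : ContinuousOn (fun p : ℝ × ℝ => uxx p.1 p.2) W)
    -- continuously differentiable in x everywhere
    (hux : ∀ x t, HasDerivAt (fun y => u y t) (ux x t) x)
    (hux_cont : Continuous fun p : ℝ × ℝ => ux p.1 p.2)
    -- initial data
    (hu0 : ∀ x, u x 0 = g x)
    -- the PDE on W
    (hpde : ∀ p ∈ W, ut p.1 p.2 = uxx p.1 p.2 + f p.1 - γ * Real.sign (u p.1 p.2)) :
    α * γ * (volume W).toReal ≤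
      (∫ x, |g x|) + ∫ t in Icc (0 : ℝ) T, ∫ x, max (|f x| - β * γ) 0 := by
  exact stmt_7_general hT.le hαβ
    (integrableOn_univ_prod_comp_fst (integrable_max_abs_sub_zero hf (mul_nonneg hβ hγ.le))
      measure_Icc_lt_top.ne)
    hK.isBounded hW hu_cont hu_supp hut huxx huxx_cont hux hux_cont hu0 hpde
end

section
/- (Traveling wave with compact one-sided support.) Let γ > 0 and σ > 0, and define v : ℝ → ℝ by v(s) = (γ/σ)s + (γ/σ²)(e^{−σs} − 1) for s ≥ 0 and v(s) = 0 for s < 0. Then: (i) v is continuously differentiable on ℝ with v(0) = v'(0) = 0; (ii) v(s) > 0 for every s > 0; (iii) v''(s) + σ v'(s) − γ = 0 for every s > 0; and consequently (iv) the function u(x,t) = v(x − σt) satisfies ∂_t u(x,t) − ∂²_x u(x,t) = −γ at every point with x > σt, and u(x,t) = 0 for x ≤ σt. -/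
/-!
The profile on the half-line `0 ≤ s` is the restriction of the entire function `w` that solves
`w'' + σ w' = γ` with zero Cauchy data `w 0 = w' 0 = 0`. Because both data vanish, extending by
zero commutes with differentiation once, which gives `C¹` regularity. Positivity is the strict
convexity of `exp`, as `w s = (γ / σ²) (exp (-σ s) - (1 - σ s))`. Finally `∂ₜ - ∂ₓ²` acts on
functions of `x - σ t` as the ordinary differential operator `-(d²/ds² + σ d/ds)`.
-/

open Filter Set Topology

section ZeroExtension

variable {E : Type*}

theorem indicator_Ici_eventuallyEq_nhds [Zero E] (f : ℝ → E) {a s : ℝ} (hs : a < s) :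
    (Ici a).indicator f =ᶠ[𝓝 s] f :=
  (eqOn_indicator (f := f)).eventuallyEq_of_mem (Ici_mem_nhds hs)

theorem eqOn_indicator_Ici_zero_Iic [Zero E] {f : ℝ → E} {a : ℝ} (hfa : f a = 0) :
    EqOn ((Ici a).indicator f) 0 (Iic a) := by
  rintro s (hs : s ≤ a)
  rcases hs.eq_or_lt with rfl | hs
  · simpa using hfa
  · exact indicator_of_notMem (notMem_Ici.mpr hs) f

variable [NormedAddCommGroup E] [NormedSpace ℝ E] {f f' : ℝ → E} {a : ℝ}

theorem hasDerivAt_indicator_Ici (hf : ∀ s ∈ Ici a, HasDerivWithinAt f (f' s) (Ici a) s)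
    (hfa : f a = 0) (hf'a : f' a = 0) (s : ℝ) :
    HasDerivAt ((Ici a).indicator f) ((Ici a).indicator f' s) s := by
  have hzero := eqOn_indicator_Ici_zero_Iic hfa
  rcases lt_trichotomy s a with hs | rfl | hs
  · rw [eqOn_indicator_Ici_zero_Iic hf'a hs.le]
    exact (hasDerivAt_const s 0).congr_of_eventuallyEq
      (hzero.eventuallyEq_of_mem (Iic_mem_nhds hs))
  · have hleft : HasDerivWithinAt ((Ici s).indicator f) 0 (Iic s) s :=
      (hasDerivWithinAt_const s (Iic s) 0).congr_of_mem hzero self_mem_Iic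
    have hright : HasDerivWithinAt ((Ici s).indicator f) 0 (Ici s) s :=
      hf'a ▸ (hf s self_mem_Ici).congr_of_mem eqOn_indicator self_mem_Ici
    simpa [hf'a, Iic_union_Ici] using hleft.union hright
  · rw [indicator_of_mem (mem_Ici.mpr hs.le)]
    exact ((hf s hs.le).hasDerivAt (Ici_mem_nhds hs)).congr_of_eventuallyEq
      (indicator_Ici_eventuallyEq_nhds f hs)

theorem contDiff_one_indicator_Ici (hf : ∀ s ∈ Ici a, HasDerivWithinAt f (f' s) (Ici a) s)
    (hf' : ContinuousOn f' (Ici a)) (hfa : f a = 0) (hf'a : f' a = 0) :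
    ContDiff ℝ 1 ((Ici a).indicator f) := by
  have hderiv := hasDerivAt_indicator_Ici hf hfa hf'a
  refine contDiff_one_iff_deriv.mpr ⟨fun s => (hderiv s).differentiableAt, ?_⟩
  rw [funext fun s => (hderiv s).deriv]
  exact continuous_indicator (by simpa [frontier_Ici] using hf'a) (by simpa using hf')

end ZeroExtension

theorem deriv_sub_deriv_deriv_comp_sub_mul {𝕜 E : Type*} [NontriviallyNormedField 𝕜]
    [NormedAddCommGroup E] [NormedSpace 𝕜 E] (v : 𝕜 → E) (σ x t : 𝕜) :
    deriv (fun τ => v (x - σ * τ)) t - deriv (deriv fun y => v (y - σ * t)) x =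
      -(deriv (deriv v) (x - σ * t) + σ • deriv v (x - σ * t)) := by
  have htime : deriv (fun τ => v (x - σ * τ)) t = -(σ • deriv v (x - σ * t)) := by
    rw [deriv_comp_mul_left σ (fun r => v (x - r)) t, deriv_comp_const_sub, smul_neg]
  have hspace : deriv (deriv fun y => v (y - σ * t)) x = deriv (deriv v) (x - σ * t) := by
    rw [funext fun y => deriv_comp_sub_const v (σ * t) y, deriv_comp_sub_const]
  rw [htime, hspace]
  abel

/-- The solution on all of `ℝ` of `w'' + σ w' = γ`, `w 0 = w' 0 = 0`, for `σ ≠ 0`; its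
restriction to `0 ≤ s` is the profile of the traveling wave of speed `σ`. -/
noncomputable def waveProfile (γ σ s : ℝ) : ℝ :=
  γ / σ * s + γ / σ ^ 2 * (Real.exp (-σ * s) - 1)

section WaveProfile

variable {γ σ : ℝ}

@[simp]
theorem waveProfile_zero : waveProfile γ σ 0 = 0 := by
  simp [waveProfile]

theorem hasDerivAt_exp_const_mul (c s : ℝ) :
    HasDerivAt (fun s => Real.exp (c * s)) (c * Real.exp (c * s)) s := by
  simpa only [mul_comm] using (hasDerivAt_const_mul c).exp

theorem hasDerivAt_waveProfile (hσ : σ ≠ 0) (s : ℝ) :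
    HasDerivAt (waveProfile γ σ) (γ / σ * (1 - Real.exp (-σ * s))) s := by
  refine (((hasDerivAt_id s).const_mul (γ / σ)).add
    (((hasDerivAt_exp_const_mul (-σ) s).sub_const 1).const_mul (γ / σ ^ 2))).congr_deriv ?_
  field_simp
  ring

theorem deriv_waveProfile (hσ : σ ≠ 0) :
    deriv (waveProfile γ σ) = fun s => γ / σ * (1 - Real.exp (-σ * s)) :=
  funext fun s => (hasDerivAt_waveProfile hσ s).deriv

theorem deriv_deriv_waveProfile (hσ : σ ≠ 0) (s : ℝ) :
    deriv (deriv (waveProfile γ σ)) s = γ * Real.exp (-σ * s) := by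
  rw [deriv_waveProfile hσ,
    (((hasDerivAt_exp_const_mul (-σ) s).const_sub 1).const_mul (γ / σ)).deriv]
  field_simp

theorem waveProfile_ode (hσ : σ ≠ 0) (s : ℝ) :
    deriv (deriv (waveProfile γ σ)) s + σ * deriv (waveProfile γ σ) s = γ := by
  rw [deriv_deriv_waveProfile hσ, deriv_waveProfile hσ]
  field_simp
  ring

theorem waveProfile_pos (hγ : 0 < γ) (hσ : σ ≠ 0) {s : ℝ} (hs : s ≠ 0) :
    0 < waveProfile γ σ s := by
  have htangent : -σ * s + 1 < Real.exp (-σ * s) :=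
    Real.add_one_lt_exp (mul_ne_zero (neg_ne_zero.mpr hσ) hs)
  calc
    0 < γ / σ ^ 2 * (Real.exp (-σ * s) - (-σ * s + 1)) :=
      mul_pos (by positivity) (sub_pos.mpr htangent)
    _ = waveProfile γ σ s := by
      rw [waveProfile]
      field_simp
      ring

end WaveProfile

theorem stmt_8_general (γ σ : ℝ) (hγ : 0 < γ) (hσ : σ ≠ 0) (v : ℝ → ℝ)
    (hv : v = fun s =>
      if 0 ≤ s then γ / σ * s + γ / σ ^ 2 * (Real.exp (-σ * s) - 1) else 0) :
    (ContDiff ℝ 1 v ∧ v 0 = 0 ∧ deriv v 0 = 0) ∧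
    (∀ s, 0 < s → 0 < v s) ∧
    (∀ s, 0 < s → deriv (deriv v) s + σ * deriv v s - γ = 0) ∧
    (∀ x t : ℝ, σ * t < x →
      deriv (fun τ => v (x - σ * τ)) t - deriv (deriv (fun y => v (y - σ * t))) x = -γ) ∧
    (∀ x t : ℝ, x ≤ σ * t → v (x - σ * t) = 0) := by
  have hv_indicator : v = (Ici 0).indicator (waveProfile γ σ) := by
    ext s
    simp only [hv, indicator_apply, mem_Ici, waveProfile]
  have hwave : ∀ s ∈ Ici 0, HasDerivWithinAt (waveProfile γ σ)
      (γ / σ * (1 - Real.exp (-σ * s))) (Ici 0) s :=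
    fun s _ => (hasDerivAt_waveProfile hσ s).hasDerivWithinAt
  have hC1 : ContDiff ℝ 1 v :=
    hv_indicator ▸ contDiff_one_indicator_Ici hwave (by fun_prop) waveProfile_zero (by simp)
  have hderiv_zero : deriv v 0 = 0 := by
    simpa [hv_indicator] using (hasDerivAt_indicator_Ici hwave waveProfile_zero (by simp) 0).deriv
  have hvanish : EqOn v 0 (Iic 0) :=
    hv_indicator ▸ eqOn_indicator_Ici_zero_Iic waveProfile_zero
  have hnear : ∀ s, 0 < s → v =ᶠ[𝓝 s] waveProfile γ σ := fun s hs =>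
    hv_indicator ▸ indicator_Ici_eventuallyEq_nhds (waveProfile γ σ) hs
  have hpos : ∀ s, 0 < s → 0 < v s := fun s hs =>
    (hnear s hs).eq_of_nhds ▸ waveProfile_pos hγ hσ hs.ne'
  have hode : ∀ s, 0 < s → deriv (deriv v) s + σ * deriv v s = γ := fun s hs => by
    rw [(hnear s hs).deriv.deriv_eq, (hnear s hs).deriv_eq, waveProfile_ode hσ]
  refine ⟨⟨hC1, hvanish self_mem_Iic, hderiv_zero⟩, hpos,
    fun s hs => sub_eq_zero.mpr (hode s hs), fun x t hx => ?_,
    fun x t hx => hvanish (sub_nonpos.mpr hx)⟩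
  rw [deriv_sub_deriv_deriv_comp_sub_mul, smul_eq_mul, hode _ (sub_pos.mpr hx)]

/-- **Traveling wave with compact one-sided support.** For `γ, σ > 0`, the profile
`v(s) = (γ/σ)s + (γ/σ²)(e^{−σs} − 1)` for `s ≥ 0`, `v(s) = 0` for `s < 0`, is `C¹`
with `v(0) = v'(0) = 0`, positive for `s > 0`, solves `v'' + σv' − γ = 0` for `s > 0`;
hence `u(x,t) = v(x − σt)` satisfies `∂ₜu − ∂ₓₓu = −γ` where `x > σt` and vanishes
for `x ≤ σt`. -/
theorem stmt_8 (γ σ : ℝ) (hγ : 0 < γ) (hσ : 0 < σ) (v : ℝ → ℝ)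
    (hv : v = fun s =>
      if 0 ≤ s then γ / σ * s + γ / σ ^ 2 * (Real.exp (-σ * s) - 1) else 0) :
    (ContDiff ℝ 1 v ∧ v 0 = 0 ∧ deriv v 0 = 0) ∧
    (∀ s, 0 < s → 0 < v s) ∧
    (∀ s, 0 < s → deriv (deriv v) s + σ * deriv v s - γ = 0) ∧
    (∀ x t : ℝ, σ * t < x →
      deriv (fun τ => v (x - σ * τ)) t - deriv (deriv (fun y => v (y - σ * t))) x = -γ) ∧
    (∀ x t : ℝ, x ≤ σ * t → v (x - σ * t) = 0) :=
  stmt_8_general γ σ hγ hσ.ne' v hv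
end

section
/- (Exact compactly supported solution of the modified elliptic equation.) Let γ ∈ (0,1], let f(x) = (1 + x²)^{−3/2}, let a = √(γ^{−2} − 1) and c = (γ + γ^{−1})/2, and define u : ℝ → ℝ by u(x) = −(1 + x²)^{1/2} + (γ/2)x² + c for |x| ≤ a and u(x) = 0 for |x| > a. Then: (i) u is continuously differentiable on ℝ with u(±a) = u'(±a) = 0; (ii) u(x) ≥ 0 for all x, with u(x) > 0 for |x| < a when γ < 1; (iii) u''(x) = −f(x) + γ for every x with |x| < a; and (iv) f(±a) = γ³. -/
/-!
Completing the square in `s = √(1 + x²)` turns `-s + γ/2 * x² + (γ + γ⁻¹)/2` into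
`γ/2 * (γ⁻¹ - s)²`, and `|x| ≤ a` says exactly that `s ≤ γ⁻¹`. Hence `u = γ/2 * ((γ⁻¹ - s)⁺)²` on
the whole line. Smoothness and sign can be read off because the squared positive part is `C¹`, and
`u'` vanishes at `±a` because `u` attains its minimum `0` there.
-/

lemma hasDerivAt_posPart_pow_succ {n : ℕ} (hn : n ≠ 0) (y : ℝ) :
    HasDerivAt (fun t : ℝ => t⁺ ^ (n + 1)) ((n + 1) * y⁺ ^ n) y := by
  rcases lt_trichotomy y 0 with hneg | rfl | hpos
  · rw [posPart_of_nonpos hneg.le, zero_pow hn, mul_zero]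
    refine (hasDerivAt_const y (0 : ℝ)).congr_of_eventuallyEq ?_
    filter_upwards [Iio_mem_nhds hneg] with t ht
    rw [posPart_of_nonpos (Set.mem_Iio.1 ht).le, zero_pow n.succ_ne_zero]
  · have hbound : (fun t : ℝ => t⁺ ^ (n + 1)) =O[nhds 0] fun t => ‖t - 0‖ ^ (n + 1) := by
      refine .of_norm_le fun t => ?_
      rw [norm_pow, sub_zero, Real.norm_of_nonneg (posPart_nonneg t)]
      exact pow_le_pow_left₀ (posPart_nonneg t) (sup_le (le_abs_self t) (abs_nonneg t)) _
    simpa [hn] using (hbound.hasFDerivAt (𝕜 := ℝ) (by lia)).hasDerivAt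
  · rw [posPart_of_nonneg hpos.le]
    have hpow : HasDerivAt (fun t : ℝ => t ^ (n + 1)) ((n + 1) * y ^ n) y := by
      simpa using hasDerivAt_pow (n + 1) y
    refine hpow.congr_of_eventuallyEq ?_
    filter_upwards [Ioi_mem_nhds hpos] with t ht
    rw [posPart_of_nonneg (Set.mem_Ioi.1 ht).le]

lemma contDiff_posPart_pow_succ (n : ℕ) : ContDiff ℝ n fun t : ℝ => t⁺ ^ (n + 1) := by
  induction n with
  | zero => exact contDiff_zero.2 (by simpa using continuous_posPart)
  | succ n ih =>
    have hderiv := hasDerivAt_posPart_pow_succ n.succ_ne_zero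
    rw [Nat.cast_succ, contDiff_succ_iff_deriv, funext fun y => (hderiv y).deriv]
    exact ⟨fun y => (hderiv y).differentiableAt, by simp, contDiff_const.mul ih⟩

lemma sqrt_one_add_sq_le_iff {b : ℝ} (hb : 1 ≤ b) (x : ℝ) :
    √(1 + x ^ 2) ≤ b ↔ |x| ≤ √(b ^ 2 - 1) := by
  rw [Real.sqrt_le_left (by linarith), Real.le_sqrt (abs_nonneg x) (by nlinarith), sq_abs,
    le_sub_iff_add_le']

lemma sqrt_one_add_sq_lt_iff {b : ℝ} (hb : 0 < b) (x : ℝ) :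
    √(1 + x ^ 2) < b ↔ |x| < √(b ^ 2 - 1) := by
  rw [Real.sqrt_lt' hb, Real.lt_sqrt (abs_nonneg x), sq_abs, lt_sub_iff_add_lt']

lemma one_add_sqrt_sub_one_sq {y : ℝ} (hy : 1 ≤ y) : 1 + √(y - 1) ^ 2 = y := by
  rw [Real.sq_sqrt (sub_nonneg.2 hy), add_sub_cancel]

lemma hasDerivAt_sqrt_one_add_sq (x : ℝ) :
    HasDerivAt (fun t : ℝ => √(1 + t ^ 2)) (x / √(1 + x ^ 2)) x := by
  have hsq : HasDerivAt (fun t : ℝ => 1 + t ^ 2) (2 * x) x := by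
    simpa using (hasDerivAt_pow 2 x).const_add 1
  convert hsq.sqrt (by positivity) using 1
  field_simp

lemma rpow_neg_three_div_two {y : ℝ} (hy : 0 ≤ y) : y ^ (-(3 : ℝ) / 2) = (√y ^ 3)⁻¹ := by
  rw [Real.rpow_div_two_eq_sqrt _ hy, Real.rpow_neg_ofNat]
  rfl

lemma hasDerivAt_div_sqrt_one_add_sq (x : ℝ) :
    HasDerivAt (fun t : ℝ => t / √(1 + t ^ 2)) ((1 + x ^ 2) ^ (-(3 : ℝ) / 2)) x := by
  have hpos : 0 < √(1 + x ^ 2) := by positivity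
  have hsq : √(1 + x ^ 2) ^ 2 = 1 + x ^ 2 := Real.sq_sqrt (by positivity)
  refine ((hasDerivAt_id' x).div (hasDerivAt_sqrt_one_add_sq x) hpos.ne').congr_deriv ?_
  rw [rpow_neg_three_div_two (by positivity)]
  field_simp
  linear_combination hsq

lemma deriv_deriv_neg_sqrt_one_add_sq_add_quadratic (γ c x : ℝ) :
    deriv (deriv fun t : ℝ => -√(1 + t ^ 2) + γ / 2 * t ^ 2 + c) x =
      -(1 + x ^ 2) ^ (-(3 : ℝ) / 2) + γ := by
  have hfirst (t : ℝ) : HasDerivAt (fun t : ℝ => -√(1 + t ^ 2) + γ / 2 * t ^ 2 + c)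
      (-(t / √(1 + t ^ 2)) + γ * t) t := by
    refine (((hasDerivAt_sqrt_one_add_sq t).fun_neg.fun_add
      ((hasDerivAt_pow 2 t).const_mul (γ / 2))).add_const c).congr_deriv ?_
    push_cast
    ring
  rw [funext fun t => (hfirst t).deriv]
  simpa using ((hasDerivAt_div_sqrt_one_add_sq x).fun_neg.fun_add
    ((hasDerivAt_id' x).const_mul γ)).deriv

/-- The compactly supported solution as a single formula: `γ/2` times the squared positive part of
`γ⁻¹ - √(1 + x²)`. For `0 < γ ≤ 1` it agrees with the piecewise definition. -/
noncomputable def compactProfile (γ x : ℝ) : ℝ := γ / 2 * (γ⁻¹ - √(1 + x ^ 2))⁺ ^ 2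

section CompactProfile

variable {γ : ℝ}

lemma compactProfile_of_sqrt_le (hγ : γ ≠ 0) {x : ℝ} (hx : √(1 + x ^ 2) ≤ γ⁻¹) :
    compactProfile γ x = -√(1 + x ^ 2) + γ / 2 * x ^ 2 + (γ + γ⁻¹) / 2 := by
  have hsq : √(1 + x ^ 2) ^ 2 = 1 + x ^ 2 := Real.sq_sqrt (by positivity)
  rw [compactProfile, posPart_of_nonneg (sub_nonneg.2 hx)]
  field_simp
  linear_combination γ ^ 2 * hsq

lemma compactProfile_of_le_sqrt {x : ℝ} (hx : γ⁻¹ ≤ √(1 + x ^ 2)) : compactProfile γ x = 0 := by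
  simp [compactProfile, posPart_of_nonpos (sub_nonpos.2 hx)]

lemma compactProfile_eq_ite (hγ : γ ∈ Set.Ioc 0 1) (x : ℝ) :
    compactProfile γ x = if |x| ≤ √(γ⁻¹ ^ 2 - 1) then
      -√(1 + x ^ 2) + γ / 2 * x ^ 2 + (γ + γ⁻¹) / 2 else 0 := by
  have hle := sqrt_one_add_sq_le_iff ((one_le_inv₀ hγ.1).2 hγ.2) x
  split_ifs with hx
  · exact compactProfile_of_sqrt_le hγ.1.ne' (hle.2 hx)
  · exact compactProfile_of_le_sqrt (not_le.1 (mt hle.1 hx)).le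

lemma contDiff_compactProfile (γ : ℝ) : ContDiff ℝ 1 (compactProfile γ) := by
  have hsqrt : ContDiff ℝ 1 fun x : ℝ => √(1 + x ^ 2) :=
    (contDiff_const.add (contDiff_id.pow 2)).sqrt fun x => by positivity
  exact contDiff_const.mul ((contDiff_posPart_pow_succ 1).comp (contDiff_const.sub hsqrt))

lemma compactProfile_nonneg (hγ : 0 ≤ γ) (x : ℝ) : 0 ≤ compactProfile γ x := by
  unfold compactProfile
  positivity

lemma compactProfile_pos (hγ : 0 < γ) {x : ℝ} (hx : |x| < √(γ⁻¹ ^ 2 - 1)) :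
    0 < compactProfile γ x := by
  have hlt := (sqrt_one_add_sq_lt_iff (inv_pos.2 hγ) x).2 hx
  exact mul_pos (half_pos hγ) (pow_pos (posPart_pos (sub_pos.2 hlt)) 2)

lemma deriv_compactProfile_of_eq_zero (hγ : 0 ≤ γ) {x : ℝ} (hx : compactProfile γ x = 0) :
    deriv (compactProfile γ) x = 0 :=
  IsLocalMin.deriv_eq_zero (.of_forall fun y => hx ▸ compactProfile_nonneg hγ y)

lemma deriv_deriv_compactProfile (hγ : 0 < γ) {x : ℝ} (hx : |x| < √(γ⁻¹ ^ 2 - 1)) :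
    deriv (deriv (compactProfile γ)) x = -(1 + x ^ 2) ^ (-(3 : ℝ) / 2) + γ := by
  have hformula : compactProfile γ =ᶠ[nhds x]
      fun t => -√(1 + t ^ 2) + γ / 2 * t ^ 2 + (γ + γ⁻¹) / 2 := by
    filter_upwards [(isOpen_lt continuous_abs continuous_const).mem_nhds hx] with t ht
    exact compactProfile_of_sqrt_le hγ.ne' ((sqrt_one_add_sq_lt_iff (inv_pos.2 hγ) t).2 ht).le
  rw [hformula.deriv.deriv_eq, deriv_deriv_neg_sqrt_one_add_sq_add_quadratic]

end CompactProfile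

/-- **Exact compactly supported solution of the modified elliptic equation.** For
`γ ∈ (0,1]`, `f(x) = (1+x²)^{−3/2}`, `a = √(γ⁻² − 1)`, `c = (γ + γ⁻¹)/2`, the function
`u(x) = −√(1+x²) + (γ/2)x² + c` for `|x| ≤ a`, `u(x) = 0` for `|x| > a`, is `C¹` with
`u(±a) = u'(±a) = 0`, nonnegative (positive on `|x| < a` when `γ < 1`), satisfies
`u'' = −f + γ` on `|x| < a`, and `f(±a) = γ³`. -/
theorem stmt_9 (γ : ℝ) (hγ : γ ∈ Set.Ioc (0 : ℝ) 1)
    (f : ℝ → ℝ) (hfdef : f = fun x => (1 + x ^ 2) ^ (-(3 : ℝ) / 2))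
    (a c : ℝ) (ha : a = Real.sqrt (γ⁻¹ ^ 2 - 1)) (hc : c = (γ + γ⁻¹) / 2)
    (u : ℝ → ℝ)
    (hu : u = fun x =>
      if |x| ≤ a then -Real.sqrt (1 + x ^ 2) + γ / 2 * x ^ 2 + c else 0) :
    (ContDiff ℝ 1 u ∧ u a = 0 ∧ u (-a) = 0 ∧ deriv u a = 0 ∧ deriv u (-a) = 0) ∧
    ((∀ x, 0 ≤ u x) ∧ (γ < 1 → ∀ x, |x| < a → 0 < u x)) ∧
    (∀ x, |x| < a → deriv (deriv u) x = -f x + γ) ∧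
    (f a = γ ^ 3 ∧ f (-a) = γ ^ 3) := by
  have hu_profile : u = compactProfile γ := by
    funext x
    rw [hu, ha, hc, compactProfile_eq_ite hγ]
  have hsq : 1 + a ^ 2 = γ⁻¹ ^ 2 := by
    rw [ha, one_add_sqrt_sub_one_sq (one_le_pow₀ ((one_le_inv₀ hγ.1).2 hγ.2))]
  have hsqrt : √(1 + a ^ 2) = γ⁻¹ := by
    rw [hsq, Real.sqrt_sq (inv_pos.2 hγ.1).le]
  have hua : compactProfile γ a = 0 := compactProfile_of_le_sqrt hsqrt.ge
  have hu_neg : compactProfile γ (-a) = 0 := compactProfile_of_le_sqrt (by rw [neg_sq, hsqrt])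
  have hfa : (1 + a ^ 2) ^ (-(3 : ℝ) / 2) = γ ^ 3 := by
    rw [rpow_neg_three_div_two (by positivity), hsqrt, inv_pow, inv_inv]
  subst hu_profile hfdef
  have hderiv {x : ℝ} := deriv_compactProfile_of_eq_zero hγ.1.le (x := x)
  exact ⟨⟨contDiff_compactProfile γ, hua, hu_neg, hderiv hua, hderiv hu_neg⟩,
    ⟨compactProfile_nonneg hγ.1.le, fun _ x hx => compactProfile_pos hγ.1 (ha ▸ hx)⟩,
    fun x hx => deriv_deriv_compactProfile hγ.1 (ha ▸ hx),
    hfa, by simpa only [neg_sq] using hfa⟩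
end
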